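/- arXiv:2404.02069 — 2 statements merged into one kernel-verified Lean document; each statement's English description precedes it below -/
import Mathlib

section
/- Let K be a field of characteristic zero, A_n(K) the Weyl algebra with a fixed partition of {1,…,n} into blocks of sizes n_1,…,n_p, M a finitely generated left A_n(K)-module with generators f_1,…,f_m, and φ_M(t_1,…,t_p) the multivariate dimension polynomial of M, i.e., φ_M(r_1,…,r_p) = dim_K Σ_{i=1}^m W_{r_1,…,r_p} f_i for all sufficiently large (r_1,…,r_p). Then M is holonomic if and only if the total degree of φ_M equals n. -/
set_option synthInstance.maxHeartbeats 400000
set_option maxHeartbeats 1000000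

open MvPolynomial

noncomputable def weylGens (n : ℕ) (K : Type) [Field K] :
    Set (Module.End K (MvPolynomial (Fin n) K)) :=
  (Set.range fun i : Fin n =>
      (LinearMap.mulLeft K (X i : MvPolynomial (Fin n) K) : Module.End K (MvPolynomial (Fin n) K))) ∪
  (Set.range fun i : Fin n => ((pderiv i).toLinearMap : Module.End K (MvPolynomial (Fin n) K)))

noncomputable def WeylAlg (n : ℕ) (K : Type) [Field K] :
    Subalgebra K (Module.End K (MvPolynomial (Fin n) K)) :=
  Algebra.adjoin K (weylGens n K)

noncomputable def wx (n : ℕ) (K : Type) [Field K] (i : Fin n) : WeylAlg n K :=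
  ⟨LinearMap.mulLeft K (X i), Algebra.subset_adjoin (Set.mem_union_left _ ⟨i, rfl⟩)⟩

noncomputable def wd (n : ℕ) (K : Type) [Field K] (i : Fin n) : WeylAlg n K :=
  ⟨(pderiv i).toLinearMap, Algebra.subset_adjoin (Set.mem_union_right _ ⟨i, rfl⟩)⟩

noncomputable def wMono (n : ℕ) (K : Type) [Field K] (α β : Fin n → ℕ) : WeylAlg n K :=
  (((List.finRange n).map fun i => wx n K i ^ α i).prod) *
  (((List.finRange n).map fun i => wd n K i ^ β i).prod)

def ordTot (n : ℕ) (α β : Fin n → ℕ) : ℕ := (∑ i, α i) + ∑ i, β i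

noncomputable def bernW (n : ℕ) (K : Type) [Field K] (r : ℤ) : Submodule K (WeylAlg n K) :=
  Submodule.span K {D | ∃ α β : Fin n → ℕ, (ordTot n α β : ℤ) ≤ r ∧ D = wMono n K α β}

noncomputable def modFil (n : ℕ) (K : Type) [Field K] (M : Type) [AddCommGroup M]
    [Module K M] [Module (WeylAlg n K) M] (m : ℕ) (g : Fin m → M) (r : ℤ) :
    Submodule K M :=
  Submodule.span K {x | ∃ i, ∃ D ∈ bernW n K r, x = D • g i}


/-- A polynomial in `p` variables with rational coefficients is numerical if it takes
integer values for all sufficiently large integer arguments. -/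
def IsNumerical {p : ℕ} (f : MvPolynomial (Fin p) ℚ) : Prop :=
  ∃ s : Fin p → ℤ, ∀ r : Fin p → ℤ, (∀ i, s i ≤ r i) →
    ∃ z : ℤ, MvPolynomial.eval (fun i => (r i : ℚ)) f = (z : ℚ)

/-- The `j`-th order of the monomial `x^α ∂^β` with respect to the partition `B`. -/
def ordBlk {n p : ℕ} (B : Fin n → Fin p) (α β : Fin n → ℕ) (j : Fin p) : ℕ :=
  ∑ i ∈ Finset.univ.filter (fun i => B i = j), (α i + β i)

/-- The component `W_{r_1,…,r_p}` of the `p`-dimensional filtration of the Weyl algebra. -/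
noncomputable def bernWB (n p : ℕ) (K : Type) [Field K] (B : Fin n → Fin p)
    (r : Fin p → ℤ) : Submodule K (WeylAlg n K) :=
  Submodule.span K
    {D | ∃ α β : Fin n → ℕ, (∀ j, (ordBlk B α β j : ℤ) ≤ r j) ∧ D = wMono n K α β}

/-- The component `M_{r_1,…,r_p} = Σ_i W_{r_1,…,r_p} g_i` of the induced filtration of `M`. -/
noncomputable def modFilB (n p : ℕ) (K : Type) [Field K] (B : Fin n → Fin p)
    (M : Type) [AddCommGroup M] [Module K M] [Module (WeylAlg n K) M]
    (m : ℕ) (g : Fin m → M) (r : Fin p → ℤ) : Submodule K M :=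
  Submodule.span K {x | ∃ i, ∃ D ∈ bernWB n p K B r, x = D • g i}

def IsHolonomic (n : ℕ) (K : Type) [Field K] (M : Type) [AddCommGroup M] [Module K M]
    [Module (WeylAlg n K) M] : Prop :=
  Module.Finite (WeylAlg n K) M ∧
  ∀ (m : ℕ) (g : Fin m → M), Submodule.span (WeylAlg n K) (Set.range g) = ⊤ →
    ∀ ψ : Polynomial ℚ,
      (∃ s : ℤ, ∀ r : ℤ, s ≤ r →
        ψ.eval (r : ℚ) = (Module.finrank K (modFil n K M m g r) : ℚ)) →
      ψ.natDegree ≤ n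

/-!
Multiplying a monomial `x^α ∂^β` by some `x_i` or `∂_i` shifts its exponent, up to terms of lower
degree. Hence, for each generator `f_i` of `M`, the exponents of those `x^α ∂^β f_i` that are not
combinations of degree-lexicographically smaller ones form an order ideal of `ℕ^(2n)`. By Noetherian
induction an order ideal has a rational Hilbert series, whence the Bernstein polynomial `ψ` exists.

Since `W_r ⊆ W_{r,…,r}` and `W_{r_1,…,r_p} ⊆ W_{r_1 + … + r_p}`, the restriction of `φ` to the
diagonal dominates `ψ` and, on every line with positive direction, `φ` is dominated by a rescaling
of `ψ`. As the leading form of `φ` cannot vanish in all positive directions, `φ` and `ψ` have the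
same degree.

This degree does not depend on the generators, since two filtrations are contained in shifts of each
other, and it is at least `n` if `M ≠ 0`, by Bernstein's inequality: commutation with `∂_i` and
`-x_i` differentiates normally ordered expressions, so by induction on `s` a nonzero element of
order at most `s` does not annihilate the `s`-th step `M_s` of the filtration. Thus the elements of
order at most `s`, whose space has dimension of order `s^(2n)`, embed into `Hom(M_s, M_{2s})`.
-/

open Filter

section HilbertSeries

theorem wellFoundedLT_lowerSet (α : Type*) [Preorder α] [WellQuasiOrderedLE α] :
    WellFoundedLT (LowerSet α) := by
  refine ⟨wellFounded_iff_isEmpty_descending_chain.2 ⟨fun ⟨D, hD⟩ => ?_⟩⟩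
  choose a ha hna using fun k => Set.exists_of_ssubset (hD k)
  obtain ⟨i, j, hij, hle⟩ := wellQuasiOrdered_le a
  have hanti : Antitone D := antitone_nat_of_succ_le fun k => (hD k).le
  exact hna i (hanti (Nat.succ_le_of_lt hij) ((D j).lower hle (ha j)))

/-- The power series of the form `Q / (1 - X) ^ d` with `Q` a polynomial; their coefficients are
eventually polynomial. -/
def IsHilbertSeries (H : PowerSeries ℚ) : Prop :=
  ∃ (d : ℕ) (Q : Polynomial ℚ), H * (1 - PowerSeries.X) ^ d = (Q : PowerSeries ℚ)

namespace IsHilbertSeries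

variable {H₁ H₂ : PowerSeries ℚ}

theorem add (h₁ : IsHilbertSeries H₁) (h₂ : IsHilbertSeries H₂) : IsHilbertSeries (H₁ + H₂) := by
  obtain ⟨d, Q, hQ⟩ := h₁
  obtain ⟨e, R, hR⟩ := h₂
  refine ⟨d + e, Q * (1 - Polynomial.X) ^ e + R * (1 - Polynomial.X) ^ d, ?_⟩
  push_cast
  rw [← hQ, ← hR]
  ring

theorem X_mul (h : IsHilbertSeries H₁) : IsHilbertSeries (PowerSeries.X * H₁) := by
  obtain ⟨d, Q, hQ⟩ := h
  exact ⟨d, Polynomial.X * Q, by push_cast; rw [mul_assoc, hQ]⟩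

theorem of_one_sub_X_mul (h : IsHilbertSeries ((1 - PowerSeries.X) * H₁)) :
    IsHilbertSeries H₁ := by
  obtain ⟨d, Q, hQ⟩ := h
  exact ⟨d + 1, Q, by rw [← hQ]; ring⟩

theorem exists_coeff_eventually_eq_eval (h : IsHilbertSeries H₁) :
    ∃ P : Polynomial ℚ, ∀ᶠ r : ℕ in atTop, PowerSeries.coeff r H₁ = P.eval (r : ℚ) := by
  obtain ⟨d, Q, hQ⟩ := h
  refine ⟨Q.hilbertPoly d, (eventually_gt_atTop Q.natDegree).mono fun r hr => ?_⟩
  rw [← Polynomial.coeff_mul_invOneSubPow_eq_hilbertPoly_eval d hr, ← hQ,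
    ← PowerSeries.invOneSubPow_inv_eq_one_sub_pow ℚ d]
  simp [mul_assoc]

end IsHilbertSeries

variable {σ : Type*} (D : LowerSet (σ →₀ ℕ)) (i : σ)

/-- The Hilbert series `∑ r, #{a ∈ D | degree a ≤ r} X ^ r` of an order ideal `D` of exponents,
where the degrees are counted cumulatively. -/
noncomputable def hilbertSeries : PowerSeries ℚ :=
  PowerSeries.mk fun r => ({a | a ∈ D ∧ a.degree ≤ r}.ncard : ℚ)

/-- The exponents in `D` which do not involve the variable `i`. -/
def eraseVar : LowerSet (σ →₀ ℕ) where
  carrier := {a | a ∈ D ∧ a i = 0}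
  lower' _ _ hba ha := ⟨D.lower hba ha.1, Nat.eq_zero_of_le_zero (ha.2 ▸ hba i)⟩

/-- The exponents which remain in `D` after multiplication by the variable `i`. When `D` is the
complement of a monomial ideal `I`, this is the complement of the colon ideal `I : X i`. -/
def colonVar : LowerSet (σ →₀ ℕ) where
  carrier := {a | a + Finsupp.single i 1 ∈ D}
  lower' _ _ hba ha := D.lower (add_le_add_left hba _) ha

theorem colonVar_le : colonVar D i ≤ D := fun _ ha => D.lower le_self_add ha

variable {D i} in
theorem eraseVar_lt {a : σ →₀ ℕ} (haD : a ∈ D) (hai : a i ≠ 0) : eraseVar D i < D :=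
  lt_of_le_of_ne (fun _ hb => hb.1) fun h => hai (h.ge haD).2

theorem setOf_mem_and_degree_le_succ (r : ℕ) :
    {a | a ∈ D ∧ a.degree ≤ r + 1} = {a | a ∈ eraseVar D i ∧ a.degree ≤ r + 1} ∪
      (· + Finsupp.single i 1) '' {a | a ∈ colonVar D i ∧ a.degree ≤ r} := by
  ext a
  constructor
  · rintro ⟨haD, har⟩
    by_cases hai : a i = 0
    · exact Or.inl ⟨⟨haD, hai⟩, har⟩
    · have hsub : a - Finsupp.single i 1 + Finsupp.single i 1 = a :=
        Finsupp.sub_add_single_one_cancel hai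
      refine Or.inr ⟨a - Finsupp.single i 1, ⟨?_, ?_⟩, hsub⟩
      · exact (hsub.symm ▸ haD : a - Finsupp.single i 1 + Finsupp.single i 1 ∈ D)
      · rw [← hsub, map_add, Finsupp.degree_single] at har
        exact Nat.le_of_add_le_add_right har
  · rintro (⟨ha, har⟩ | ⟨b, ⟨hbD, hbr⟩, rfl⟩)
    · exact ⟨ha.1, har⟩
    · exact ⟨hbD, by simpa using hbr⟩

theorem hilbertSeries_eq_eraseVar_add_X_mul_colonVar [Finite σ] :
    hilbertSeries D =
      hilbertSeries (eraseVar D i) + PowerSeries.X * hilbertSeries (colonVar D i) := by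
  have hfin (E : LowerSet (σ →₀ ℕ)) (r : ℕ) : {a | a ∈ E ∧ a.degree ≤ r}.Finite :=
    (Finsupp.finite_of_degree_le r).subset fun _ ha => ha.2
  ext (_ | r)
  · have hzero : {a | a ∈ D ∧ a.degree ≤ 0} = {a | a ∈ eraseVar D i ∧ a.degree ≤ 0} := by
      ext a
      refine ⟨fun ⟨haD, ha⟩ => ⟨⟨haD, ?_⟩, ha⟩, fun ⟨haD, ha⟩ => ⟨haD.1, ha⟩⟩
      exact Nat.eq_zero_of_le_zero ((Finsupp.le_degree i a).trans ha)
    simp only [hilbertSeries, map_add, PowerSeries.coeff_mk, PowerSeries.coeff_zero_X_mul, hzero,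
      add_zero]
  · rw [map_add, PowerSeries.coeff_succ_X_mul]
    simp only [hilbertSeries, PowerSeries.coeff_mk]
    rw [setOf_mem_and_degree_le_succ D i, Set.ncard_union_eq ?_ (hfin _ _) ((hfin _ _).image _),
      Set.ncard_image_of_injective _ (add_left_injective _), Nat.cast_add]
    rw [Set.disjoint_right]
    rintro _ ⟨b, -, rfl⟩ ⟨⟨-, hb⟩, -⟩
    simp at hb

theorem isHilbertSeries_hilbertSeries [Finite σ] : IsHilbertSeries (hilbertSeries D) := by
  have := wellFoundedLT_lowerSet (σ →₀ ℕ)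
  induction D using WellFoundedLT.induction with | ind D ih
  by_cases hD : ∃ a ∈ D, ∃ i, a i ≠ 0
  · obtain ⟨a, haD, i, hai⟩ := hD
    have herase := ih _ (eraseVar_lt haD hai)
    have hrec := hilbertSeries_eq_eraseVar_add_X_mul_colonVar D i
    rcases (colonVar_le D i).lt_or_eq with hlt | heq
    · exact hrec ▸ herase.add (ih _ hlt).X_mul
    · rw [heq] at hrec
      refine .of_one_sub_X_mul ?_
      rwa [sub_mul, one_mul, sub_eq_of_eq_add hrec]
  · push Not at hD
    have hzero {a : σ →₀ ℕ} (ha : a ∈ D) : a = 0 := Finsupp.ext (hD a ha)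
    refine .of_one_sub_X_mul ⟨0, Polynomial.C ((D : Set (σ →₀ ℕ)).ncard : ℚ), ?_⟩
    have hset (r : ℕ) : {a | a ∈ D ∧ a.degree ≤ r} = D :=
      Set.ext fun a => ⟨And.left, fun ha => ⟨ha, by simp [hzero ha]⟩⟩
    ext (_ | r) <;>
      simp [hilbertSeries, hset, sub_mul, PowerSeries.coeff_succ_X_mul]

end HilbertSeries

section Standard

variable {K V I : Type*} [Field K] [AddCommGroup V] [Module K V] [LinearOrder I]

/-- The standard indices of a family `v`: those `i` for which `v i` is not a combination of vectors
with smaller indices. -/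
def standardIndices (K : Type*) [Field K] [Module K V] (v : I → V) : Set I :=
  {i | v i ∉ Submodule.span K (v '' Set.Iio i)}

theorem linearIndepOn_standardIndices (v : I → V) :
    LinearIndepOn K v (standardIndices K v) := by
  classical
  rw [linearIndepOn_iff']
  intro s c hs hc
  by_contra! hne
  obtain ⟨i, ⟨hi, hci⟩, hmax⟩ : ∃ i, (i ∈ s ∧ c i ≠ 0) ∧ ∀ j ∈ s, c j ≠ 0 → j ≤ i := by
    obtain ⟨i, hi, hmax⟩ := (s.filter (c · ≠ 0)).exists_max_image id
      (hne.imp fun j hj => Finset.mem_filter.2 hj)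
    exact ⟨i, Finset.mem_filter.1 hi, fun j hj hcj => hmax j (Finset.mem_filter.2 ⟨hj, hcj⟩)⟩
  refine hs hi ((Submodule.smul_mem_iff _ hci).1 ?_)
  rw [← Finset.add_sum_erase s _ hi] at hc
  rw [eq_neg_of_add_eq_zero_left hc]
  refine Submodule.neg_mem _ (Submodule.sum_mem _ fun j hj => ?_)
  obtain ⟨hji, hjs⟩ := Finset.mem_erase.1 hj
  rcases eq_or_ne (c j) 0 with hcj | hcj
  · rw [hcj, zero_smul]
    exact Submodule.zero_mem _
  · exact Submodule.smul_mem _ _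
      (Submodule.subset_span ⟨j, lt_of_le_of_ne (hmax j hjs hcj) hji, rfl⟩)

theorem span_image_inter_standardIndices [WellFoundedLT I] (v : I → V) {T : Set I}
    (hT : IsLowerSet T) :
    Submodule.span K (v '' (T ∩ standardIndices K v)) = Submodule.span K (v '' T) := by
  refine le_antisymm (Submodule.span_mono (Set.image_mono Set.inter_subset_left))
    (Submodule.span_le.2 ?_)
  rintro _ ⟨i, hi, rfl⟩
  induction i using WellFoundedLT.induction with | ind i ih
  by_cases hstd : i ∈ standardIndices K v
  · exact Submodule.subset_span ⟨i, ⟨hi, hstd⟩, rfl⟩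
  · refine Submodule.span_le.2 ?_ (not_not.1 hstd)
    rintro _ ⟨j, hj, rfl⟩
    exact ih j hj (hT (le_of_lt hj) hi)

theorem finrank_span_image_eq_ncard_inter_standardIndices [WellFoundedLT I] (v : I → V) {T : Set I}
    (hT : IsLowerSet T) (hfin : T.Finite) :
    Module.finrank K (Submodule.span K (v '' T)) = (T ∩ standardIndices K v).ncard := by
  have := (hfin.inter_of_left (standardIndices K v)).fintype
  rw [← span_image_inter_standardIndices v hT, Set.image_eq_range,
    finrank_span_eq_card ((linearIndepOn_standardIndices v).mono Set.inter_subset_right),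
    Set.ncard_eq_toFinset_card', Set.toFinset_card]

theorem notMem_standardIndices_of_strictMono {v : I → V} {s : I → I} (hs : StrictMono s)
    (T : V →ₗ[K] V)
    (hT : ∀ i, T (v i) - v (s i) ∈ Submodule.span K (v '' Set.Iio (s i))) {i : I}
    (hi : i ∉ standardIndices K v) : s i ∉ standardIndices K v := by
  refine not_not.2 (?_ : v (s i) ∈ Submodule.span K (v '' Set.Iio (s i)))
  have hmap : Submodule.span K (v '' Set.Iio i) ≤
      (Submodule.span K (v '' Set.Iio (s i))).comap T := by
    refine Submodule.span_le.2 ?_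
    rintro _ ⟨j, hj, rfl⟩
    have hlow : T (v j) - v (s j) ∈ Submodule.span K (v '' Set.Iio (s i)) :=
      Submodule.span_mono (Set.image_mono (Set.Iio_subset_Iio (hs hj).le)) (hT j)
    have hsj : v (s j) ∈ Submodule.span K (v '' Set.Iio (s i)) :=
      Submodule.subset_span ⟨s j, hs hj, rfl⟩
    exact (Submodule.sub_mem_iff_left _ hsj).1 hlow
  have hTi : T (v i) ∈ Submodule.span K (v '' Set.Iio (s i)) := hmap (not_not.1 hi)
  exact (Submodule.sub_mem_iff_right _ hTi).1 (hT i)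

end Standard

section HilbertFunction

variable {K V σ ι : Type*} [Field K] [AddCommGroup V] [Module K V] {v : (σ →₀ ℕ) → ι → V}

/-- The span of the vectors `v a i` whose exponent `a` has degree at most `r`. -/
def degreeSpan (K : Type*) [Field K] [Module K V] (v : (σ →₀ ℕ) → ι → V) (r : ℕ) :
    Submodule K V :=
  Submodule.span K {x | ∃ a i, a.degree ≤ r ∧ v a i = x}

/-- The family `v`, with indices compared degree-lexicographically by exponent, and then by
generator. -/
def degLexFamily (v : (σ →₀ ℕ) → ι → V) (x : DegLex (σ →₀ ℕ) ×ₗ ι) : V :=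
  v (ofDegLex (ofLex x).1) (ofLex x).2

theorem degreeSpan_eq_span_degLexFamily (r : ℕ) :
    degreeSpan K v r = Submodule.span K
      (degLexFamily v '' {x | (ofDegLex (ofLex x).1).degree ≤ r}) := by
  refine congrArg _ (Set.ext fun x => ⟨?_, ?_⟩)
  · rintro ⟨a, i, ha, rfl⟩
    exact ⟨toLex (toDegLex a, i), ha, rfl⟩
  · rintro ⟨y, hy, rfl⟩
    exact ⟨_, _, hy, rfl⟩

/-- The index of a vector after multiplication by the monomial of exponent `c`. -/
noncomputable def shiftIndex (c : σ →₀ ℕ) (x : DegLex (σ →₀ ℕ) ×ₗ ι) : DegLex (σ →₀ ℕ) ×ₗ ι :=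
  toLex (toDegLex (ofDegLex (ofLex x).1 + c), (ofLex x).2)

theorem isLowerSet_of_add_single_mem {S : Set (σ →₀ ℕ)}
    (hS : ∀ a l, a + Finsupp.single l 1 ∈ S → a ∈ S) : IsLowerSet S := by
  suffices h : ∀ c a : σ →₀ ℕ, a + c ∈ S → a ∈ S by
    rintro b a hab hb
    obtain ⟨c, rfl⟩ := exists_add_of_le hab
    exact h c a hb
  intro c
  induction c using Finsupp.induction_linear with
  | zero => simp
  | add c d hc hd => exact fun a ha => hc a (hd _ (by rwa [add_assoc]))
  | single l k =>
    induction k with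
    | zero => simp
    | succ k ih => exact fun a ha => ih a (hS _ l (by rwa [add_assoc, ← Finsupp.single_add]))

section Order

variable [LinearOrder σ] [LinearOrder ι]

theorem isLowerSet_setOf_degree_le (r : ℕ) :
    IsLowerSet {x : DegLex (σ →₀ ℕ) ×ₗ ι | (ofDegLex (ofLex x).1).degree ≤ r} :=
  fun _ _ hyx hx =>
    (Finsupp.DegLex.monotone_degree (Prod.Lex.monotone_fst _ _ hyx)).trans hx

theorem degreeSpan_le_span_Iio {a b : σ →₀ ℕ} (hab : a.degree < b.degree) (i : ι) :
    degreeSpan K v a.degree ≤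
      Submodule.span K (degLexFamily v '' Set.Iio (toLex (toDegLex b, i))) := by
  rw [degreeSpan_eq_span_degLexFamily]
  refine Submodule.span_mono (Set.image_mono fun x hx => ?_)
  exact Prod.Lex.lt_iff.2 (Or.inl (Finsupp.DegLex.lt_iff.2 (Or.inl (lt_of_le_of_lt hx hab))))

theorem strictMono_shiftIndex (c : σ →₀ ℕ) :
    StrictMono (shiftIndex c : DegLex (σ →₀ ℕ) ×ₗ ι → _) := by
  intro x y hxy
  refine Prod.Lex.lt_iff.2 ((Prod.Lex.lt_iff.1 hxy).imp (fun h => ?_) fun h => ⟨?_, h.2⟩)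
  · exact add_lt_add_left h (toDegLex c)
  · exact congrArg (· + toDegLex c) h.1

/-- The exponents `a` for which the vector `v a i` is standard for the degree-lexicographic
order. -/
def standardExponents (K : Type*) [Field K] [Module K V] (v : (σ →₀ ℕ) → ι → V) (i : ι) :
    Set (σ →₀ ℕ) :=
  {a | toLex (toDegLex a, i) ∈ standardIndices K (degLexFamily v)}

theorem isLowerSet_standardExponents (T : σ → V →ₗ[K] V)
    (hT : ∀ l a i, T l (v a i) - v (a + Finsupp.single l 1) i ∈ degreeSpan K v a.degree) (i : ι) :
    IsLowerSet (standardExponents K v i) := by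
  refine isLowerSet_of_add_single_mem fun a l ha => ?_
  by_contra hna
  have hstep (x : DegLex (σ →₀ ℕ) ×ₗ ι) :
      T l (degLexFamily v x) - degLexFamily v (shiftIndex (Finsupp.single l 1) x) ∈
        Submodule.span K (degLexFamily v '' Set.Iio (shiftIndex (Finsupp.single l 1) x)) :=
    degreeSpan_le_span_Iio (by simp) _ (hT l (ofDegLex (ofLex x).1) (ofLex x).2)
  exact notMem_standardIndices_of_strictMono (i := toLex (toDegLex a, i))
    (strictMono_shiftIndex (Finsupp.single l 1)) (T l) hstep hna ha

theorem finrank_degreeSpan_eq_sum_ncard [Finite σ] [Fintype ι] (r : ℕ) :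
    Module.finrank K (degreeSpan K v r) =
      ∑ i, {a | a ∈ standardExponents K v i ∧ a.degree ≤ r}.ncard := by
  let E (i : ι) : Set (σ →₀ ℕ) := {a | a ∈ standardExponents K v i ∧ a.degree ≤ r}
  let e (i : ι) (a : σ →₀ ℕ) : DegLex (σ →₀ ℕ) ×ₗ ι := toLex (toDegLex a, i)
  have hEfin (i : ι) : (E i).Finite := (Finsupp.finite_of_degree_le r).subset fun _ ha => ha.2
  have hunion : {x : DegLex (σ →₀ ℕ) ×ₗ ι | (ofDegLex (ofLex x).1).degree ≤ r} ∩
      standardIndices K (degLexFamily v) = ⋃ i, e i '' E i := by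
    ext x
    simp only [Set.mem_iUnion]
    constructor
    · exact fun ⟨hxr, hx⟩ => ⟨_, _, ⟨hx, hxr⟩, rfl⟩
    · rintro ⟨i, a, ⟨ha, har⟩, rfl⟩
      exact ⟨har, ha⟩
  have hdisj : Pairwise (Function.onFun Disjoint fun i => e i '' E i) := by
    refine fun i j hij => Set.disjoint_left.2 ?_
    rintro _ ⟨a, _, rfl⟩ ⟨b, _, hab⟩
    exact hij (congrArg (fun x => (ofLex x).2) hab).symm
  have hfin : {x : DegLex (σ →₀ ℕ) ×ₗ ι | (ofDegLex (ofLex x).1).degree ≤ r}.Finite :=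
    ((Finsupp.finite_of_degree_le r).prod Set.finite_univ).subset fun _ hx => ⟨hx, trivial⟩
  rw [degreeSpan_eq_span_degLexFamily, finrank_span_image_eq_ncard_inter_standardIndices _
    (isLowerSet_setOf_degree_le r) hfin, hunion,
    Set.ncard_iUnion_of_finite (fun i => (hEfin i).image _) hdisj, finsum_eq_sum_of_fintype]
  exact Finset.sum_congr rfl fun i _ =>
    Set.ncard_image_of_injective _ fun a b h =>
      congrArg (fun x : DegLex (σ →₀ ℕ) ×ₗ ι => ofDegLex (ofLex x).1) h

end Order

theorem exists_finrank_degreeSpan_eventually_eq_eval [Finite σ] [Finite ι] (T : σ → V →ₗ[K] V)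
    (hT : ∀ l a i, T l (v a i) - v (a + Finsupp.single l 1) i ∈ degreeSpan K v a.degree) :
    ∃ P : Polynomial ℚ, ∀ᶠ r : ℕ in atTop,
      (Module.finrank K (degreeSpan K v r) : ℚ) = P.eval (r : ℚ) := by
  let : LinearOrder σ := .lift' _ (Finite.equivFin σ).injective
  let : LinearOrder ι := .lift' _ (Finite.equivFin ι).injective
  let : Fintype ι := .ofFinite ι
  have hpoly (i : ι) : ∃ P : Polynomial ℚ, ∀ᶠ r : ℕ in atTop,
      ({a | a ∈ standardExponents K v i ∧ a.degree ≤ r}.ncard : ℚ) = P.eval (r : ℚ) := by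
    simpa [hilbertSeries] using (isHilbertSeries_hilbertSeries
      ⟨_, isLowerSet_standardExponents T hT i⟩).exists_coeff_eventually_eq_eval
  choose P hP using hpoly
  refine ⟨∑ i, P i, (eventually_all.2 hP).mono fun r hr => ?_⟩
  rw [finrank_degreeSpan_eq_sum_ncard, Polynomial.eval_finsetSum, Nat.cast_sum]
  exact Finset.sum_congr rfl fun i _ => hr i

end HilbertFunction

section Growth

theorem natDegree_le_of_eventually_abs_eval_le {P Q : Polynomial ℚ}
    (h : ∀ᶠ r : ℕ in atTop, |P.eval (r : ℚ)| ≤ |Q.eval (r : ℚ)|) : P.natDegree ≤ Q.natDegree := by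
  by_contra! hlt
  have hP : P ≠ 0 := by
    rintro rfl
    simp at hlt
  have ho : (Q.eval ·) =o[atTop] (P.eval ·) :=
    Polynomial.isLittleO_atTop_of_degree_lt Q P (Polynomial.degree_lt_degree hlt)
  have hsmall : ∀ᶠ x : ℚ in atTop, ‖Q.eval x‖ ≤ 2⁻¹ * ‖P.eval x‖ := ho.def (by norm_num)
  have hroot := Polynomial.eventually_atTop_not_isRoot P hP
  obtain ⟨r, hle, hQP, hPr⟩ := (h.and (tendsto_natCast_atTop_atTop.eventually
    (hsmall.and hroot))).exists
  have hpos : 0 < ‖P.eval (r : ℚ)‖ := norm_pos_iff.2 hPr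
  have hPQ : ‖P.eval (r : ℚ)‖ ≤ ‖Q.eval (r : ℚ)‖ := by
    simp only [← Rat.norm_cast_real, Real.norm_eq_abs]
    exact_mod_cast hle
  linarith

theorem natDegree_le_of_eventually_abs_eval_le_comp {P Q : Polynomial ℚ} (a b : ℕ)
    (h : ∀ᶠ r : ℕ in atTop, |P.eval (r : ℚ)| ≤ |Q.eval ((a * r + b : ℕ) : ℚ)|) :
    P.natDegree ≤ Q.natDegree := by
  let L : Polynomial ℚ := Polynomial.C (a : ℚ) * Polynomial.X + Polynomial.C (b : ℚ)
  refine (natDegree_le_of_eventually_abs_eval_le (Q := Q.comp L) ?_).trans ?_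
  · simpa [L] using h
  · rw [Polynomial.natDegree_comp]
    exact mul_le_of_le_one_right' Polynomial.natDegree_linear_le

end Growth

section Ray

variable {R τ : Type*} [CommRing R]

/-- The restriction `t ↦ φ (a t)` of a polynomial `φ` to the line through `0` and `a`. -/
noncomputable def restrictLine (a : τ → R) (φ : MvPolynomial τ R) : Polynomial R :=
  aeval (fun j => Polynomial.C (a j) * Polynomial.X) φ

theorem eval_restrictLine (a : τ → R) (φ : MvPolynomial τ R) (t : R) :
    (restrictLine a φ).eval t = eval (fun j => a j * t) φ := by
  induction φ using MvPolynomial.induction_on with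
  | C c => simp [restrictLine]
  | add φ ψ hφ hψ => simpa [restrictLine] using congrArg₂ (· + ·) hφ hψ
  | mul_X φ j hφ => simpa [restrictLine] using congrArg (· * (a j * t)) hφ

theorem natDegree_restrictLine_le (a : τ → R) (φ : MvPolynomial τ R) :
    (restrictLine a φ).natDegree ≤ φ.totalDegree := by
  have hlin (j : τ) : (Polynomial.C (a j) * Polynomial.X).natDegree ≤ 1 :=
    (Polynomial.natDegree_C_mul_le _ _).trans Polynomial.natDegree_X_le
  simpa [restrictLine] using aeval_natDegree_le φ le_rfl _ hlin

theorem coeff_restrictLine (a : τ → R) (φ : MvPolynomial τ R) (N : ℕ) :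
    (restrictLine a φ).coeff N = eval a (homogeneousComponent N φ) := by
  classical
  induction φ using MvPolynomial.induction_on' with
  | add φ ψ hφ hψ =>
    rw [map_add, map_add, ← hφ, ← hψ, ← Polynomial.coeff_add, restrictLine, map_add]; rfl
  | monomial d c =>
    have hray : restrictLine a (monomial d c) =
        Polynomial.monomial d.degree (c * ∏ j ∈ d.support, a j ^ d j) := by
      simp [restrictLine, aeval_monomial, Finsupp.prod, mul_pow, Finset.prod_mul_distrib,
        Finset.prod_pow_eq_pow_sum, ← Polynomial.C_mul_X_pow_eq_monomial, mul_assoc,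
        Finsupp.degree_apply, Polynomial.algebraMap_eq]
    rw [hray, homogeneousComponent_of_mem (isHomogeneous_monomial c rfl), Polynomial.coeff_monomial]
    simp only [eq_comm (a := N)]
    split_ifs <;> simp [eval_monomial, Finsupp.prod]

theorem homogeneousComponent_totalDegree_ne_zero {φ : MvPolynomial τ R} (hφ : φ ≠ 0) :
    homogeneousComponent φ.totalDegree φ ≠ 0 := by
  obtain ⟨d, hd, hmax⟩ := Finset.exists_mem_eq_sup φ.support (support_nonempty.2 hφ)
    fun s => s.sum fun _ e => e
  refine ne_zero_iff.2 ⟨d, ?_⟩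
  rw [coeff_homogeneousComponent, if_pos]
  · exact mem_support_iff.1 hd
  · exact hmax.symm

theorem exists_pos_totalDegree_le_natDegree_restrictLine (φ : MvPolynomial τ ℚ) :
    ∃ a : τ → ℕ, (∀ j, 0 < a j) ∧
      φ.totalDegree ≤ (restrictLine (fun j => (a j : ℚ)) φ).natDegree := by
  rcases eq_or_ne φ 0 with rfl | hφ
  · exact ⟨1, fun _ => one_pos, by simp⟩
  by_contra! hlt
  refine homogeneousComponent_totalDegree_ne_zero hφ ?_
  refine funext_set (fun _ => Set.range fun k : ℕ => ((k + 1 : ℕ) : ℚ)) (fun _ => ?_) fun x hx => ?_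
  · exact Set.infinite_range_of_injective fun x y h => by simpa using h
  · choose b hb using fun j => hx j (Set.mem_univ j)
    obtain rfl : (fun j => ((b j + 1 : ℕ) : ℚ)) = x := funext hb
    rw [← coeff_restrictLine, map_zero]
    exact Polynomial.coeff_eq_zero_of_natDegree_lt (hlt _ fun j => Nat.succ_pos _)

end Ray

section Bernstein

theorem totalDegree_pderiv_le {R σ : Type*} [CommSemiring R] (l : σ) (c : MvPolynomial σ R) :
    (pderiv l c).totalDegree ≤ c.totalDegree - 1 := by
  refine Finset.sup_le fun d hd => ?_
  rw [mem_support_iff, coeff_pderiv] at hd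
  have hle := le_totalDegree (mem_support_iff.2 (left_ne_zero_of_mul hd))
  have hdeg : (d + Finsupp.single l 1).degree = d.degree + 1 := by simp
  change d.degree ≤ _
  change (d + Finsupp.single l 1).degree ≤ _ at hle
  omega

theorem eq_C_of_forall_pderiv_eq_zero {R σ : Type*} [CommSemiring R] [NoZeroDivisors R]
    [CharZero R] {c : MvPolynomial σ R} (hc : ∀ l, pderiv l c = 0) : c = C (coeff 0 c) := by
  classical
  ext d
  rw [coeff_C]
  split_ifs with hd
  · rw [← hd]
  obtain ⟨l, hl⟩ := Finsupp.ne_iff.1 (Ne.symm hd)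
  have hcoeff : coeff (d - Finsupp.single l 1) (pderiv l c) = 0 := by rw [hc, coeff_zero]
  rw [coeff_pderiv, Finsupp.sub_add_single_one_cancel hl] at hcoeff
  exact (mul_eq_zero.1 hcoeff).resolve_right (Nat.cast_add_one_ne_zero _)

theorem finrank_restrictDegree {R σ : Type*} [CommRing R] [Nontrivial R] [Fintype σ] (k : ℕ) :
    Module.finrank R (restrictDegree σ R k) = (k + 1) ^ Fintype.card σ := by
  let e : {d : σ →₀ ℕ | ∀ l, d l ≤ k} ≃ (σ → Fin (k + 1)) :=
    { toFun d l := ⟨d.1 l, Nat.lt_succ_of_le (d.2 l)⟩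
      invFun f := ⟨Finsupp.equivFunOnFinite.symm fun l => f l, fun l => Nat.le_of_lt_succ (f l).2⟩
      left_inv d := by ext; simp
      right_inv f := by ext; simp }
  calc Module.finrank R (restrictDegree σ R k) = Nat.card {d : σ →₀ ℕ | ∀ l, d l ≤ k} :=
        Module.finrank_eq_nat_card_basis (basisRestrictSupport R _)
    _ = Nat.card (σ → Fin (k + 1)) := Nat.card_congr e
    _ = (k + 1) ^ Fintype.card σ := by simp [Nat.card_fun]

theorem totalDegree_le_of_mem_restrictDegree {R σ : Type*} [CommSemiring R] [Fintype σ] {k : ℕ}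
    {c : MvPolynomial σ R} (hc : c ∈ restrictDegree σ R k) :
    c.totalDegree ≤ Fintype.card σ * k := by
  refine Finset.sup_le fun d hd => ?_
  change d.degree ≤ _
  rw [Finsupp.degree_eq_sum]
  exact (Finset.sum_le_card_nsmul _ _ k fun l _ => (mem_restrictDegree _ _ _).1 hc d hd l).trans_eq
    (by simp)

variable {σ K V : Type*} [Field K] [AddCommGroup V] [Module K V]
  {N : MvPolynomial σ K →ₗ[K] Module.End K V} {z : σ → Module.End K V} {F : ℕ → Submodule K V}

theorem eq_zero_of_le_ker [CharZero K] (hone : N 1 = 1)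
    (hcomm : ∀ l c, z l * N c - N c * z l = N (pderiv l c))
    (hF : Monotone F) (hF₀ : F 0 ≠ ⊥) (hz : ∀ l r, F r ≤ (F (r + 1)).comap (z l))
    (r : ℕ) {c : MvPolynomial σ K} (hc : c.totalDegree ≤ r) (hker : F r ≤ LinearMap.ker (N c)) :
    c = 0 := by
  have hzero {c : MvPolynomial σ K} {r : ℕ} (hderiv : ∀ l, pderiv l c = 0)
      (hker : F r ≤ LinearMap.ker (N c)) : c = 0 := by
    obtain ⟨x, hx, hx0⟩ := (Submodule.ne_bot_iff _).1 hF₀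
    have hC := eq_C_of_forall_pderiv_eq_zero hderiv
    have hcx : N c x = coeff 0 c • x := by
      conv_lhs => rw [hC, ← mul_one (C _), ← smul_eq_C_mul, map_smul, hone]
      rfl
    rw [hC, (smul_eq_zero.1 (hcx.symm.trans (hker (hF r.zero_le hx)))).resolve_right hx0, map_zero]
  induction r generalizing c with
  | zero =>
    refine hzero (fun l => ?_) hker
    rw [(totalDegree_eq_zero_iff_eq_C).1 (Nat.le_zero.1 hc), pderiv_C]
  | succ r ih =>
    refine hzero (fun l => ih ((totalDegree_pderiv_le l c).trans (by omega)) fun x hx => ?_) hker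
    have hx₀ : N c x = 0 := hker (hF r.le_succ hx)
    have hzx₀ : N c (z l x) = 0 := hker (hz l r hx)
    rw [LinearMap.mem_ker, ← hcomm, LinearMap.sub_apply, Module.End.mul_apply,
      Module.End.mul_apply, hx₀, hzx₀, map_zero, sub_zero]

theorem add_one_pow_card_le_finrank_mul_finrank [Fintype σ] [CharZero K]
    [∀ r, FiniteDimensional K (F r)] (hone : N 1 = 1)
    (hcomm : ∀ l c, z l * N c - N c * z l = N (pderiv l c))
    (hF : Monotone F) (hF₀ : F 0 ≠ ⊥) (hz : ∀ l r, F r ≤ (F (r + 1)).comap (z l))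
    (hN : ∀ r s c, c.totalDegree ≤ s → F r ≤ (F (r + s)).comap (N c)) (k : ℕ) :
    (k + 1) ^ Fintype.card σ ≤ Module.finrank K (F (Fintype.card σ * k)) *
      Module.finrank K (F (Fintype.card σ * k + Fintype.card σ * k)) := by
  set s := Fintype.card σ * k
  have hmaps (c : restrictDegree σ K k) : ∀ x ∈ F s, N c x ∈ F (s + s) :=
    hN s s c (totalDegree_le_of_mem_restrictDegree c.2)
  let Φ : restrictDegree σ K k →ₗ[K] F s →ₗ[K] F (s + s) :=
    { toFun c := (N c).restrict (hmaps c)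
      map_add' c d := by ext; simp
      map_smul' a c := by ext; simp }
  have hΦ : Function.Injective Φ := (injective_iff_map_eq_zero Φ).2 fun c hc => by
    refine Subtype.ext <| eq_zero_of_le_ker hone hcomm hF hF₀ hz s
      (totalDegree_le_of_mem_restrictDegree c.2) fun x hx => ?_
    exact congrArg Subtype.val (LinearMap.congr_fun hc ⟨x, hx⟩)
  calc (k + 1) ^ Fintype.card σ = Module.finrank K (restrictDegree σ K k) :=
        (finrank_restrictDegree k).symm
    _ ≤ Module.finrank K (F s →ₗ[K] F (s + s)) := LinearMap.finrank_le_finrank_of_injective hΦ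
    _ = Module.finrank K (F s) * Module.finrank K (F (s + s)) := Module.finrank_linearMap K K _ _

end Bernstein

section PowProd

variable {A : Type*} [Monoid A] {n : ℕ}

/-- The ordered monomial `f₁ ^ a₁ ⋯ fₙ ^ aₙ`; a list product because `wMono` is built from these. -/
def powProd (f : Fin n → A) (a : Fin n → ℕ) : A :=
  ((List.finRange n).map fun i => f i ^ a i).prod

theorem powProd_zero (f : Fin n → A) : powProd f 0 = 1 := by
  simp [powProd]

theorem powProd_single (f : Fin n → A) (i : Fin n) : powProd f (Pi.single i 1) = f i := by
  rw [powProd, List.prod_map_eq_pow_single i _ fun j hj _ => by simp [hj],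
    List.count_eq_one_of_mem (List.nodup_finRange n) (List.mem_finRange i)]
  simp

theorem powProd_add {f : Fin n → A} (hf : ∀ i j, Commute (f i) (f j)) (a b : Fin n → ℕ) :
    powProd f (a + b) = powProd f a * powProd f b := by
  unfold powProd
  induction List.finRange n with
  | nil => simp
  | cons i l ih =>
    have hi : Commute (f i ^ b i) (l.map fun j => f j ^ a j).prod :=
      Commute.list_prod_right _ _ fun y hy => by
        obtain ⟨j, -, rfl⟩ := List.mem_map.1 hy
        exact (hf i j).pow_pow _ _
    simp only [List.map_cons, List.prod_cons, ih]
    rw [Pi.add_apply, pow_add, mul_assoc, hi.left_comm, mul_assoc]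

theorem powProd_mem_pow {R B : Type*} [CommSemiring R] [Semiring B] [Algebra R B]
    {S : Submodule R B} {f : Fin n → B} (hf : ∀ i, f i ∈ S) (a : Fin n → ℕ) :
    powProd f a ∈ S ^ ∑ i, a i := by
  rw [← List.sum_ofFn, List.ofFn_eq_map]
  exact SetLike.list_prod_map_mem_graded (A := fun k => S ^ k) _ _ _ fun i _ =>
    Submodule.pow_mem_pow _ (hf i) _

end PowProd

section WeylPair

variable {A : Type*} [Ring A] {n : ℕ} {x d : Fin n → A}

/-- The canonical commutation relations of the generators `x` and `d = ∂` of a Weyl algebra. -/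
structure IsWeylPair (x d : Fin n → A) : Prop where
  commute_left : ∀ i j, Commute (x i) (x j)
  commute_right : ∀ i j, Commute (d i) (d j)
  mul_sub_mul : ∀ k i, d k * x i - x i * d k = if k = i then 1 else 0

/-- The elements whose commutators induce `∂/∂x_i` (left summand) and `∂/∂ξ_i` (right summand) on
normally ordered expressions. -/
def dualGen (x d : Fin n → A) : Fin n ⊕ Fin n → A :=
  Sum.elim d (-x)

theorem IsWeylPair.dualGen_mul_left_sub (h : IsWeylPair x d) (l : Fin n ⊕ Fin n) (i : Fin n) :
    dualGen x d l * x i - x i * dualGen x d l = if l = Sum.inl i then 1 else 0 := by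
  rcases l with k | k
  · simpa [dualGen] using h.mul_sub_mul k i
  · simp [dualGen, (h.commute_left k i).eq]

theorem IsWeylPair.dualGen_mul_right_sub (h : IsWeylPair x d) (l : Fin n ⊕ Fin n) (i : Fin n) :
    dualGen x d l * d i - d i * dualGen x d l = if l = Sum.inr i then 1 else 0 := by
  rcases l with k | k
  · simp [dualGen, (h.commute_right k i).eq]
  · simpa [dualGen, neg_add_eq_sub, eq_comm] using h.mul_sub_mul i k

variable (R : Type*) [CommRing R] [Algebra R A]

/-- The normal ordering map: the linear map from commutative polynomials in symbols `x_i` (left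
summand) and `ξ_i` (right summand) that sends `x ^ α * ξ ^ β` to `x ^ α * d ^ β`. -/
noncomputable def normalOrder (x d : Fin n → A) : MvPolynomial (Fin n ⊕ Fin n) R →ₗ[R] A :=
  (basisMonomials (Fin n ⊕ Fin n) R).constr R fun a =>
    powProd x (a ∘ Sum.inl) * powProd d (a ∘ Sum.inr)

theorem normalOrder_monomial (x d : Fin n → A) (a : Fin n ⊕ Fin n →₀ ℕ) :
    normalOrder R x d (monomial a 1) = powProd x (a ∘ Sum.inl) * powProd d (a ∘ Sum.inr) := by
  rw [normalOrder, ← Module.Basis.constr_basis (basisMonomials (Fin n ⊕ Fin n) R) R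
    (fun a => powProd x (a ∘ Sum.inl) * powProd d (a ∘ Sum.inr)) a, coe_basisMonomials]

theorem normalOrder_one (x d : Fin n → A) : normalOrder R x d 1 = 1 := by
  refine (normalOrder_monomial R x d 0).trans ?_
  rw [Finsupp.coe_zero, Pi.zero_comp, Pi.zero_comp, powProd_zero, powProd_zero, one_mul]

variable {R}

theorem IsWeylPair.normalOrder_X_inl_mul (h : IsWeylPair x d) (i : Fin n)
    (c : MvPolynomial (Fin n ⊕ Fin n) R) :
    normalOrder R x d (X (Sum.inl i) * c) = x i * normalOrder R x d c := by
  suffices heq : normalOrder R x d ∘ₗ LinearMap.mulLeft R (X (Sum.inl i)) =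
      LinearMap.mulLeft R (x i) ∘ₗ normalOrder R x d from LinearMap.congr_fun heq c
  refine (basisMonomials _ R).ext fun a => ?_
  simp only [coe_basisMonomials, LinearMap.comp_apply, LinearMap.mulLeft_apply, X, monomial_mul,
    one_mul, normalOrder_monomial]
  rw [← mul_assoc, ← powProd_single x i, ← powProd_add h.commute_left]
  congr 2 <;> ext j <;> simp [Finsupp.single_apply, Pi.single_apply, eq_comm]

theorem IsWeylPair.normalOrder_mul_X_inr (h : IsWeylPair x d) (i : Fin n)
    (c : MvPolynomial (Fin n ⊕ Fin n) R) :
    normalOrder R x d (c * X (Sum.inr i)) = normalOrder R x d c * d i := by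
  suffices heq : normalOrder R x d ∘ₗ LinearMap.mulRight R (X (Sum.inr i)) =
      LinearMap.mulRight R (d i) ∘ₗ normalOrder R x d from LinearMap.congr_fun heq c
  refine (basisMonomials _ R).ext fun a => ?_
  simp only [coe_basisMonomials, LinearMap.comp_apply, LinearMap.mulRight_apply, X, monomial_mul,
    one_mul, normalOrder_monomial]
  rw [mul_assoc, ← powProd_single d i, ← powProd_add h.commute_right]
  congr 2 <;> ext j <;> simp [Finsupp.single_apply, Pi.single_apply, eq_comm]

theorem IsWeylPair.dualGen_mul_normalOrder_sub (h : IsWeylPair x d) (l : Fin n ⊕ Fin n)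
    (c : MvPolynomial (Fin n ⊕ Fin n) R) :
    dualGen x d l * normalOrder R x d c - normalOrder R x d c * dualGen x d l =
      normalOrder R x d (pderiv l c) := by
  classical
  have hpderiv (l' : Fin n ⊕ Fin n) (c : MvPolynomial (Fin n ⊕ Fin n) R) :
      pderiv l (c * X l') = pderiv l c * X l' + if l = l' then c else 0 := by
    rw [pderiv_mul, pderiv_X, Pi.single_apply, mul_ite, mul_one, mul_zero]
    simp only [eq_comm]
  set z := dualGen x d l with hz
  induction c using MvPolynomial.induction_on with
  | C a =>
    rw [pderiv_C, map_zero, ← mul_one (C a), ← smul_eq_C_mul, map_smul, normalOrder_one,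
      mul_smul_comm, smul_mul_assoc, one_mul, mul_one, sub_self]
  | add c₁ c₂ h₁ h₂ =>
    rw [map_add, map_add, map_add, ← h₁, ← h₂]
    noncomm_ring
  | mul_X c l' hc =>
    set N := normalOrder R x d
    rcases l' with i | i
    · calc z * N (c * X (Sum.inl i)) - N (c * X (Sum.inl i)) * z
        _ = x i * (z * N c - N c * z) + (z * x i - x i * z) * N c := by
          rw [mul_comm c, h.normalOrder_X_inl_mul]
          noncomm_ring
        _ = N (pderiv l (c * X (Sum.inl i))) := by
          rw [hc, hz, h.dualGen_mul_left_sub, hpderiv, map_add, mul_comm _ (X _),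
            h.normalOrder_X_inl_mul, ite_mul, one_mul, zero_mul, apply_ite N, map_zero]
    · calc z * N (c * X (Sum.inr i)) - N (c * X (Sum.inr i)) * z
        _ = (z * N c - N c * z) * d i + N c * (z * d i - d i * z) := by
          rw [h.normalOrder_mul_X_inr]
          noncomm_ring
        _ = N (pderiv l (c * X (Sum.inr i))) := by
          rw [hc, hz, h.dualGen_mul_right_sub, hpderiv, map_add, h.normalOrder_mul_X_inr,
            mul_ite, mul_one, mul_zero, apply_ite N, map_zero]

variable (R) in
/-- The span of `1`, the `x_i` and the `d_i`, whose powers are the Bernstein filtration. -/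
def genSpan (x d : Fin n → A) : Submodule R A :=
  Submodule.span R (insert 1 (Set.range x ∪ Set.range d))

theorem one_le_genSpan (x d : Fin n → A) : 1 ≤ genSpan R x d :=
  Submodule.one_le.2 <| Submodule.subset_span <| Set.mem_insert _ _

theorem left_mem_genSpan (x d : Fin n → A) (i : Fin n) : x i ∈ genSpan R x d :=
  Submodule.subset_span <| .inr <| .inl ⟨i, rfl⟩

theorem right_mem_genSpan (x d : Fin n → A) (i : Fin n) : d i ∈ genSpan R x d :=
  Submodule.subset_span <| .inr <| .inr ⟨i, rfl⟩

theorem genSpan_pow_mono (x d : Fin n → A) : Monotone fun r => genSpan R x d ^ r :=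
  fun _ _ => pow_le_pow_right' (one_le_genSpan x d)

theorem fg_genSpan (x d : Fin n → A) : (genSpan R x d).FG :=
  Submodule.fg_span (((Set.finite_range x).union (Set.finite_range d)).insert 1)

theorem exists_mem_genSpan_pow {D : A} (hD : D ∈ Algebra.adjoin R (Set.range x ∪ Set.range d)) :
    ∃ r, D ∈ genSpan R x d ^ r := by
  induction hD using Algebra.adjoin_induction with
  | mem D hD =>
    exact ⟨1, (pow_one (genSpan R x d)).symm ▸ Submodule.subset_span (.inr hD)⟩
  | algebraMap a => exact ⟨0, (pow_zero (genSpan R x d)).symm ▸ Submodule.algebraMap_mem a⟩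
  | add D E _ _ hD hE =>
    obtain ⟨⟨r, hr⟩, s, hs⟩ := hD, hE
    exact ⟨max r s, add_mem (genSpan_pow_mono x d (le_max_left r s) hr)
      (genSpan_pow_mono x d (le_max_right r s) hs)⟩
  | mul D E _ _ hD hE =>
    obtain ⟨⟨r, hr⟩, s, hs⟩ := hD, hE
    exact ⟨r + s, pow_add (genSpan R x d) r s ▸ Submodule.mul_mem_mul hr hs⟩

theorem map_normalOrder_restrictTotalDegree_eq_span (x d : Fin n → A) (r : ℕ) :
    (restrictTotalDegree (Fin n ⊕ Fin n) R r).map (normalOrder R x d) = Submodule.span R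
      {D | ∃ a : Fin n ⊕ Fin n →₀ ℕ, a.degree ≤ r ∧ normalOrder R x d (monomial a 1) = D} := by
  rw [restrictTotalDegree, restrictSupport_eq_span, Submodule.map_span, Set.image_image]
  rfl

theorem IsWeylPair.mul_normalOrder_mem (h : IsWeylPair x d) {r : ℕ}
    {c : MvPolynomial (Fin n ⊕ Fin n) R} (hc : c.totalDegree ≤ r) {s : A}
    (hs : s ∈ genSpan R x d) :
    s * normalOrder R x d c ∈
      (restrictTotalDegree (Fin n ⊕ Fin n) R (r + 1)).map (normalOrder R x d) := by
  have hX (l : Fin n ⊕ Fin n) : (X l : MvPolynomial (Fin n ⊕ Fin n) R).totalDegree ≤ 1 :=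
    (totalDegree_monomial_le _ _).trans_eq (Finsupp.degree_single l 1)
  suffices hle : genSpan R x d ≤ ((restrictTotalDegree _ R (r + 1)).map (normalOrder R x d)).comap
      (LinearMap.mulRight R (normalOrder R x d c)) from hle hs
  refine Submodule.span_le.2 <| Set.insert_subset ?_ <| Set.union_subset ?_ ?_
  · exact ⟨c, (mem_restrictTotalDegree _ _ _).2 (hc.trans r.le_succ), (one_mul _).symm⟩
  · rintro _ ⟨i, rfl⟩
    refine ⟨X (Sum.inl i) * c, (mem_restrictTotalDegree _ _ _).2 ?_, h.normalOrder_X_inl_mul i c⟩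
    exact (totalDegree_mul _ _).trans ((add_le_add (hX _) hc).trans_eq (add_comm 1 r))
  · rintro _ ⟨k, rfl⟩
    refine ⟨c * X (Sum.inr k) + pderiv (Sum.inl k) c, (mem_restrictTotalDegree _ _ _).2 ?_, ?_⟩
    · refine (totalDegree_add _ _).trans (max_le ?_ ?_)
      · exact (totalDegree_mul _ _).trans (add_le_add hc (hX _))
      · exact (totalDegree_pderiv_le _ c).trans ((Nat.sub_le _ 1).trans (hc.trans r.le_succ))
    · rw [map_add, h.normalOrder_mul_X_inr, ← h.dualGen_mul_normalOrder_sub (Sum.inl k) c]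
      exact add_sub_cancel _ _

theorem IsWeylPair.map_normalOrder_restrictTotalDegree (h : IsWeylPair x d) (r : ℕ) :
    (restrictTotalDegree (Fin n ⊕ Fin n) R r).map (normalOrder R x d) = genSpan R x d ^ r := by
  refine le_antisymm ?_ ?_
  · rw [map_normalOrder_restrictTotalDegree_eq_span, Submodule.span_le]
    rintro _ ⟨a, ha, rfl⟩
    rw [normalOrder_monomial]
    refine genSpan_pow_mono x d ha ?_
    have hdeg : a.degree = (∑ i, a (Sum.inl i)) + ∑ i, a (Sum.inr i) := by
      rw [Finsupp.degree_eq_sum, Fintype.sum_sum_type]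
    simp only [hdeg, pow_add]
    exact Submodule.mul_mem_mul (powProd_mem_pow (left_mem_genSpan x d) _)
      (powProd_mem_pow (right_mem_genSpan x d) _)
  · induction r with
    | zero =>
      rw [pow_zero, Submodule.one_le]
      exact ⟨1, by simp [mem_restrictTotalDegree], normalOrder_one R x d⟩
    | succ r ih =>
      rw [pow_succ']
      refine Submodule.mul_le.2 fun s hs D hD => ?_
      obtain ⟨c, hc, rfl⟩ := ih hD
      exact h.mul_normalOrder_mem ((mem_restrictTotalDegree _ _ _).1 hc) hs

end WeylPair

section WeylModule

theorem smul_eq_map₂_lsmul {R A M : Type*} [CommSemiring R] [Semiring A] [Algebra R A]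
    [AddCommMonoid M] [Module R M] [Module A M] [IsScalarTower R A M] (S : Submodule R A)
    (T : Submodule R M) : S • T = Submodule.map₂ (Algebra.lsmul R R M).toLinearMap S T :=
  le_antisymm (Submodule.smul_le.2 fun _ hs _ ht => Submodule.apply_mem_map₂ _ hs ht)
    (Submodule.map₂_le.2 fun _ hs _ ht => Submodule.smul_mem_smul hs ht)

theorem span_smul_eq_smul_span {R A M ι : Type*} [CommSemiring R] [Semiring A] [Algebra R A]
    [AddCommMonoid M] [Module R M] [Module A M] [IsScalarTower R A M] (S : Submodule R A)
    (g : ι → M) :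
    Submodule.span R {x | ∃ i, ∃ D ∈ S, x = D • g i} = S • Submodule.span R (Set.range g) := by
  refine le_antisymm (Submodule.span_le.2 ?_) ?_
  · rintro _ ⟨i, D, hD, rfl⟩
    exact Submodule.smul_mem_smul hD (Submodule.subset_span ⟨i, rfl⟩)
  · rw [← S.span_eq, smul_eq_map₂_lsmul, Submodule.map₂_span_span]
    refine Submodule.span_mono ?_
    rintro _ ⟨D, hD, _, ⟨i, rfl⟩, rfl⟩
    exact ⟨i, D, Submodule.subset_span hD, rfl⟩

variable {K A V : Type*} [Field K] [Ring A] [Algebra K A] [AddCommGroup V] [Module K V]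
  [Module A V] [IsScalarTower K A V] {n : ℕ} {x d : Fin n → A}

theorem IsWeylPair.genSpan_pow_smul_span_eq_degreeSpan (h : IsWeylPair x d) {ι : Type*}
    (g : ι → V) (r : ℕ) :
    genSpan K x d ^ r • Submodule.span K (Set.range g) =
      degreeSpan K (fun a i => normalOrder K x d (monomial a 1) • g i) r := by
  rw [← h.map_normalOrder_restrictTotalDegree, map_normalOrder_restrictTotalDegree_eq_span,
    smul_eq_map₂_lsmul, Submodule.map₂_span_span, degreeSpan]
  congr 1
  ext y
  simp only [Set.mem_image2, Set.mem_ofPred_eq, Set.mem_range]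
  constructor
  · rintro ⟨_, ⟨a, ha, rfl⟩, _, ⟨i, rfl⟩, rfl⟩
    exact ⟨a, i, ha, rfl⟩
  · rintro ⟨a, i, ha, rfl⟩
    exact ⟨_, ⟨a, ha, rfl⟩, _, ⟨i, rfl⟩, rfl⟩

theorem IsWeylPair.smul_sub_mem_degreeSpan (h : IsWeylPair x d) {ι : Type*} (g : ι → V)
    (l : Fin n ⊕ Fin n) (a : Fin n ⊕ Fin n →₀ ℕ) (i : ι) :
    Sum.elim x d l • normalOrder K x d (monomial a 1) • g i -
        normalOrder K x d (monomial (a + Finsupp.single l 1) 1) • g i ∈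
      degreeSpan K (fun a i => normalOrder K x d (monomial a 1) • g i) a.degree := by
  have hshift : monomial (a + Finsupp.single l 1) (1 : K) = monomial a 1 * X l := by
    rw [X, monomial_mul, one_mul]
  rw [← mul_smul, ← sub_smul, hshift]
  rcases l with k | k
  · rw [mul_comm (monomial a 1), h.normalOrder_X_inl_mul, Sum.elim_inl, sub_self, zero_smul]
    exact zero_mem _
  · have hcomm := h.dualGen_mul_normalOrder_sub (Sum.inl k) (monomial a (1 : K))
    rw [dualGen, Sum.elim_inl] at hcomm
    rw [h.normalOrder_mul_X_inr, Sum.elim_inr, hcomm, ← h.genSpan_pow_smul_span_eq_degreeSpan,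
      ← h.map_normalOrder_restrictTotalDegree]
    refine Submodule.smul_mem_smul (Submodule.mem_map_of_mem ?_)
      (Submodule.subset_span (Set.mem_range_self i))
    rw [mem_restrictTotalDegree]
    exact (totalDegree_pderiv_le _ _).trans
      ((Nat.sub_le _ 1).trans (totalDegree_monomial_le a 1))

theorem fg_genSpan_pow_smul (x d : Fin n → A) {G : Submodule K V} (hG : G.FG) (r : ℕ) :
    (genSpan K x d ^ r • G).FG := by
  rw [smul_eq_map₂_lsmul]
  exact ((fg_genSpan x d).pow r).map₂ _ hG

theorem genSpan_pow_smul_mono (x d : Fin n → A) (G : Submodule K V) :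
    Monotone fun r => genSpan K x d ^ r • G :=
  fun _ _ hrs => Submodule.smul_mono_left (genSpan_pow_mono x d hrs)

theorem smul_mem_genSpan_pow_smul {G : Submodule K V} {r s : ℕ} {D : A} {v : V}
    (hD : D ∈ genSpan K x d ^ s) (hv : v ∈ genSpan K x d ^ r • G) :
    D • v ∈ genSpan K x d ^ (r + s) • G := by
  rw [add_comm, pow_add, ← smul_eq_mul, Submodule.smul_assoc]
  exact Submodule.smul_mem_smul hD hv

theorem exists_mem_genSpan_pow_smul (hxd : Algebra.adjoin K (Set.range x ∪ Set.range d) = ⊤)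
    {G : Submodule K V} (hG : Submodule.span A (G : Set V) = ⊤) (v : V) :
    ∃ r, v ∈ genSpan K x d ^ r • G := by
  have hv : v ∈ Submodule.span A (G : Set V) := hG ▸ Submodule.mem_top
  induction hv using Submodule.span_induction with
  | mem v hv => exact ⟨0, by rwa [pow_zero, Submodule.one_smul]⟩
  | zero => exact ⟨0, zero_mem _⟩
  | add u v _ _ hu hv =>
    obtain ⟨⟨r, hr⟩, s, hs⟩ := hu, hv
    exact ⟨max r s, add_mem (genSpan_pow_smul_mono x d G (le_max_left r s) hr)
      (genSpan_pow_smul_mono x d G (le_max_right r s) hs)⟩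
  | smul D v _ hv =>
    obtain ⟨r, hr⟩ := hv
    obtain ⟨s, hs⟩ := exists_mem_genSpan_pow (R := K) (x := x) (d := d) (D := D)
      (hxd ▸ Algebra.mem_top)
    exact ⟨r + s, smul_mem_genSpan_pow_smul hs hr⟩

theorem exists_le_genSpan_pow_smul (hxd : Algebra.adjoin K (Set.range x ∪ Set.range d) = ⊤)
    {G G' : Submodule K V} (hG : Submodule.span A (G : Set V) = ⊤) (hG' : G'.FG) :
    ∃ r, G' ≤ genSpan K x d ^ r • G := by
  obtain ⟨s, rfl⟩ := hG'
  choose r hr using exists_mem_genSpan_pow_smul hxd hG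
  exact ⟨s.sup r, Submodule.span_le.2 fun v hv =>
    genSpan_pow_smul_mono x d G (Finset.le_sup hv) (hr v)⟩

/-- `P` is the Bernstein polynomial of the filtration `r ↦ S ^ r • G`, where `S` is the span of
`1`, the `x_i` and the `d_i`: its values at all large `r` are the dimensions of the filtration. -/
def IsBernsteinPolynomial (x d : Fin n → A) (G : Submodule K V) (P : Polynomial ℚ) : Prop :=
  ∀ᶠ r : ℕ in atTop,
    (Module.finrank K (genSpan K x d ^ r • G : Submodule K V) : ℚ) = P.eval (r : ℚ)

theorem IsWeylPair.exists_isBernsteinPolynomial (h : IsWeylPair x d) {ι : Type*} [Finite ι]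
    (g : ι → V) :
    ∃ P, IsBernsteinPolynomial x d (Submodule.span K (Set.range g)) P := by
  obtain ⟨P, hP⟩ := exists_finrank_degreeSpan_eventually_eq_eval
    (fun l => Algebra.lsmul K K V (Sum.elim x d l)) (h.smul_sub_mem_degreeSpan g)
  exact ⟨P, hP.mono fun r hr => by rw [h.genSpan_pow_smul_span_eq_degreeSpan, hr]⟩

theorem IsBernsteinPolynomial.natDegree_le_of_span_eq_top
    (hxd : Algebra.adjoin K (Set.range x ∪ Set.range d) = ⊤) {G G' : Submodule K V}
    {P P' : Polynomial ℚ} (hP : IsBernsteinPolynomial x d G P)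
    (hP' : IsBernsteinPolynomial x d G' P') (hG : G.FG) (hspan : Submodule.span A (G : Set V) = ⊤)
    (hG' : G'.FG) : P'.natDegree ≤ P.natDegree := by
  obtain ⟨c, hc⟩ := exists_le_genSpan_pow_smul hxd hspan hG'
  refine natDegree_le_of_eventually_abs_eval_le_comp 1 c ?_
  filter_upwards [hP', (tendsto_add_atTop_nat c).eventually hP] with r hr' hr
  have := Module.Finite.of_fg (fg_genSpan_pow_smul x d hG (r + c))
  rw [one_mul, ← hr, ← hr', Nat.abs_cast, Nat.abs_cast, Nat.cast_le]
  refine Submodule.finrank_mono <| Submodule.smul_le.2 fun D hD v hv => ?_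
  rw [add_comm]
  exact smul_mem_genSpan_pow_smul hD (hc hv)

theorem IsWeylPair.add_one_pow_le_finrank_mul_finrank [CharZero K] (h : IsWeylPair x d)
    {G : Submodule K V} (hG : G.FG) (hG₀ : G ≠ ⊥) (k : ℕ) :
    (k + 1) ^ (n + n) ≤
      Module.finrank K (genSpan K x d ^ ((n + n) * k) • G : Submodule K V) *
        Module.finrank K (genSpan K x d ^ ((n + n) * k + (n + n) * k) • G : Submodule K V) := by
  set F : ℕ → Submodule K V := fun r => genSpan K x d ^ r • G
  have hfin (r : ℕ) : FiniteDimensional K (F r) :=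
    .of_fg <| fg_genSpan_pow_smul x d hG r
  have hmul {s : ℕ} {D : A} (hD : D ∈ genSpan K x d ^ s) (r : ℕ) :
      F r ≤ (F (r + s)).comap (Algebra.lsmul K K V D) :=
    fun _ => smul_mem_genSpan_pow_smul hD
  have hdual (l : Fin n ⊕ Fin n) : dualGen x d l ∈ genSpan K x d ^ 1 := by
    rw [pow_one]
    rcases l with k | k
    · exact right_mem_genSpan x d k
    · exact neg_mem (left_mem_genSpan x d k)
  have hN {s : ℕ} {c : MvPolynomial (Fin n ⊕ Fin n) K} (hc : c.totalDegree ≤ s) :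
      normalOrder K x d c ∈ genSpan K x d ^ s := by
    rw [← h.map_normalOrder_restrictTotalDegree]
    exact Submodule.mem_map_of_mem ((mem_restrictTotalDegree _ _ _).2 hc)
  have key := add_one_pow_card_le_finrank_mul_finrank (F := F)
    (N := (Algebra.lsmul K K V).toLinearMap ∘ₗ normalOrder K x d)
    (z := fun l => Algebra.lsmul K K V (dualGen x d l))
    (by simp [normalOrder_one])
    (fun l c => by simp [← map_mul, ← map_sub, h.dualGen_mul_normalOrder_sub])
    (genSpan_pow_smul_mono x d G)
    (by simpa only [F, pow_zero, Submodule.one_smul] using hG₀)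
    (fun l => hmul (hdual l))
    (fun r s c hc => hmul (hN hc) r) k
  rwa [Fintype.card_sum, Fintype.card_fin] at key

theorem IsBernsteinPolynomial.le_natDegree [CharZero K] {G : Submodule K V} {P : Polynomial ℚ}
    (hP : IsBernsteinPolynomial x d G P) (h : IsWeylPair x d) (hG : G.FG) (hG₀ : G ≠ ⊥) :
    n ≤ P.natDegree := by
  obtain ⟨b, hb⟩ := eventually_atTop.1 hP
  set f : ℕ → ℕ := fun r => Module.finrank K (genSpan K x d ^ r • G : Submodule K V)
  have hf : Monotone f := fun r s hrs =>
    have := Module.Finite.of_fg (fg_genSpan_pow_smul x d hG s)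
    Submodule.finrank_mono (genSpan_pow_smul_mono x d G hrs)
  have hbound (k : ℕ) :
      ((k : ℚ) + 1) ^ (n + n) ≤ P.eval ((4 * n * k + b : ℕ) : ℚ) ^ 2 := by
    rw [← hb _ (Nat.le_add_left _ _)]
    exact_mod_cast (h.add_one_pow_le_finrank_mul_finrank hG hG₀ k).trans <|
      (Nat.mul_le_mul (hf (by lia)) (hf (by lia))).trans_eq (sq _).symm
  have hdeg : ((Polynomial.X + 1 : Polynomial ℚ) ^ (n + n)).natDegree ≤ (P ^ 2).natDegree := by
    refine natDegree_le_of_eventually_abs_eval_le_comp (4 * n) b (.of_forall fun k => ?_)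
    simpa [abs_of_nonneg (by positivity : (0 : ℚ) ≤ k + 1)] using hbound k
  rw [Polynomial.natDegree_pow, Polynomial.natDegree_pow, ← Polynomial.C_1,
    Polynomial.natDegree_X_add_C] at hdeg
  lia

end WeylModule

section WeylAlgebra

theorem pderiv_pderiv_comm {R σ : Type*} [CommRing R] (i j : σ) (c : MvPolynomial σ R) :
    pderiv i (pderiv j c) = pderiv j (pderiv i c) := by
  classical
  have hzero : ⁅(pderiv i : Derivation R (MvPolynomial σ R) (MvPolynomial σ R)), pderiv j⁆ = 0 :=
    derivation_ext fun k => by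
      rw [Derivation.commutator_apply, pderiv_X, pderiv_X, Pi.single_apply, Pi.single_apply]
      split_ifs <;> simp
  rw [← sub_eq_zero, ← Derivation.commutator_apply, hzero, Derivation.zero_apply]

variable (n : ℕ) (K : Type) [Field K]

theorem isWeylPair_wx_wd : IsWeylPair (wx n K) (wd n K) where
  commute_left i j := Subtype.ext <| LinearMap.ext fun c => mul_left_comm (X i) (X j) c
  commute_right i j := Subtype.ext <| LinearMap.ext fun c => pderiv_pderiv_comm i j c
  mul_sub_mul k i := Subtype.ext <| LinearMap.ext fun c => by
    have hleibniz : pderiv k (X i * c) - X i * pderiv k c = if k = i then c else 0 := by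
      rw [pderiv_mul, pderiv_X, add_sub_cancel_right, Pi.single_apply, ite_mul, one_mul, zero_mul]
      simp only [eq_comm]
    refine hleibniz.trans ?_
    split_ifs <;> rfl

theorem adjoin_range_wx_union_range_wd :
    Algebra.adjoin K (Set.range (wx n K) ∪ Set.range (wd n K)) = ⊤ := by
  refine top_unique <| Algebra.adjoin_adjoin_coe_preimage.ge.trans <| Algebra.adjoin_mono ?_
  rintro ⟨_, _⟩ (⟨i, rfl⟩ | ⟨i, rfl⟩)
  · exact .inl ⟨i, rfl⟩
  · exact .inr ⟨i, rfl⟩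

variable {n K}

theorem bernW_natCast (r : ℕ) : bernW n K r = genSpan K (wx n K) (wd n K) ^ r := by
  rw [← (isWeylPair_wx_wd n K).map_normalOrder_restrictTotalDegree,
    map_normalOrder_restrictTotalDegree_eq_span, bernW]
  congr 1
  ext D
  simp only [Set.mem_ofPred_eq, normalOrder_monomial, Nat.cast_le, ordTot]
  constructor
  · rintro ⟨α, β, hαβ, rfl⟩
    refine ⟨Finsupp.equivFunOnFinite.symm (Sum.elim α β), ?_, rfl⟩
    simpa [Finsupp.degree_eq_sum] using hαβ
  · rintro ⟨a, ha, rfl⟩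
    exact ⟨a ∘ Sum.inl, a ∘ Sum.inr, by simpa [Finsupp.degree_eq_sum] using ha, rfl⟩

variable {p : ℕ} {B : Fin n → Fin p}

theorem sum_ordBlk (α β : Fin n → ℕ) : ∑ j, ordBlk B α β j = ordTot n α β := by
  simp only [ordBlk, Finset.sum_fiberwise, Finset.sum_add_distrib, ordTot]

theorem bernW_le_bernWB {r : ℤ} {s : Fin p → ℤ} (hrs : ∀ j, r ≤ s j) :
    bernW n K r ≤ bernWB n p K B s := by
  refine Submodule.span_mono fun D => ?_
  rintro ⟨α, β, hαβ, rfl⟩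
  refine ⟨α, β, fun j => le_trans ?_ (hαβ.trans (hrs j)), rfl⟩
  rw [← sum_ordBlk (B := B)]
  exact_mod_cast Finset.single_le_sum (fun _ _ => Nat.zero_le _) (Finset.mem_univ j)

theorem bernWB_le_bernW (r : Fin p → ℤ) : bernWB n p K B r ≤ bernW n K (∑ j, r j) := by
  refine Submodule.span_mono fun D => ?_
  rintro ⟨α, β, hαβ, rfl⟩
  refine ⟨α, β, ?_, rfl⟩
  rw [← sum_ordBlk (B := B), Nat.cast_sum]
  exact Finset.sum_le_sum fun j _ => hαβ j

variable {M : Type} [AddCommGroup M] [Module K M] [Module (WeylAlg n K) M]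
  [IsScalarTower K (WeylAlg n K) M] {m : ℕ} {g : Fin m → M}

theorem modFil_natCast (r : ℕ) : modFil n K M m g r =
    genSpan K (wx n K) (wd n K) ^ r • Submodule.span K (Set.range g) := by
  rw [modFil, span_smul_eq_smul_span, bernW_natCast]

theorem modFil_le_modFilB {r : ℤ} {s : Fin p → ℤ} (hrs : ∀ j, r ≤ s j) :
    modFil n K M m g r ≤ modFilB n p K B M m g s := by
  rw [modFil, modFilB, span_smul_eq_smul_span, span_smul_eq_smul_span]
  exact Submodule.smul_mono_left (bernW_le_bernWB hrs)

theorem modFilB_le_modFil (r : Fin p → ℤ) :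
    modFilB n p K B M m g r ≤ modFil n K M m g (∑ j, r j) := by
  rw [modFil, modFilB, span_smul_eq_smul_span, span_smul_eq_smul_span]
  exact Submodule.smul_mono_left (bernWB_le_bernW r)

end WeylAlgebra

section DimensionPolynomial

variable {n p : ℕ} {K : Type} [Field K] {B : Fin n → Fin p} {M : Type} [AddCommGroup M] [Module K M]
  [Module (WeylAlg n K) M] {m : ℕ} {g : Fin m → M}

/-- `φ` is the multivariate dimension polynomial of `M` with respect to the generators `g` and the
partition of the variables into the fibres of `B`. -/
def IsDimensionPolynomial (K : Type) [Field K] (B : Fin n → Fin p) [Module K M]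
    [Module (WeylAlg n K) M] (g : Fin m → M) (φ : MvPolynomial (Fin p) ℚ) : Prop :=
  ∀ᶠ r : Fin p → ℤ in atTop,
    eval (fun j => (r j : ℚ)) φ = Module.finrank K (modFilB n p K B M m g r)

theorem IsDimensionPolynomial.eventually_eval_restrictLine {φ : MvPolynomial (Fin p) ℚ}
    (hφ : IsDimensionPolynomial K B g φ) {a : Fin p → ℕ} (ha : ∀ j, 0 < a j) :
    ∀ᶠ k : ℕ in atTop, (restrictLine (fun j => (a j : ℚ)) φ).eval (k : ℚ) =
      Module.finrank K (modFilB n p K B M m g fun j => ((a j * k : ℕ) : ℤ)) := by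
  have htendsto : Tendsto (fun k j => ((a j * k : ℕ) : ℤ)) atTop (atTop : Filter (Fin p → ℤ)) := by
    refine tendsto_atTop.2 fun s => eventually_all.2 fun j => ?_
    exact (tendsto_natCast_atTop_atTop.comp
      (tendsto_id.const_mul_atTop' (ha j))).eventually_ge_atTop (s j)
  filter_upwards [htendsto.eventually hφ] with k hk
  rw [eval_restrictLine, ← hk]
  simp

variable [IsScalarTower K (WeylAlg n K) M]

theorem finite_modFil (r : ℕ) : Module.Finite K (modFil n K M m g r) := by
  rw [modFil_natCast]
  exact .of_fg <| fg_genSpan_pow_smul _ _ (Submodule.fg_span (Set.finite_range g)) r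

theorem finite_modFilB (r : Fin p → ℕ) :
    Module.Finite K (modFilB n p K B M m g fun j => (r j : ℤ)) := by
  have hle := modFilB_le_modFil (K := K) (B := B) (g := g) fun j => (r j : ℤ)
  have := finite_modFil (n := n) (K := K) (g := g) (∑ j, r j)
  rw [← Nat.cast_sum] at hle
  exact Submodule.finiteDimensional_of_le hle

theorem finrank_modFil_le_finrank_modFilB {r : ℕ} {s : Fin p → ℕ} (hrs : ∀ j, r ≤ s j) :
    Module.finrank K (modFil n K M m g r) ≤
      Module.finrank K (modFilB n p K B M m g fun j => (s j : ℤ)) :=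
  have := finite_modFilB (K := K) (B := B) (g := g) s
  Submodule.finrank_mono <| modFil_le_modFilB fun j => Int.ofNat_le.2 (hrs j)

theorem finrank_modFilB_le_finrank_modFil {r : Fin p → ℕ} {s : ℕ} (hs : ∑ j, r j ≤ s) :
    Module.finrank K (modFilB n p K B M m g fun j => (r j : ℤ)) ≤
      Module.finrank K (modFil n K M m g s) := by
  have := finite_modFil (n := n) (K := K) (g := g) s
  refine Submodule.finrank_mono <| (modFilB_le_modFil fun j => (r j : ℤ)).trans ?_
  rw [← Nat.cast_sum, modFil_natCast, modFil_natCast]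
  exact genSpan_pow_smul_mono _ _ _ hs

theorem isBernsteinPolynomial_iff_exists_forall_eval_eq {ψ : Polynomial ℚ} :
    IsBernsteinPolynomial (wx n K) (wd n K) (Submodule.span K (Set.range g)) ψ ↔
      ∃ s : ℤ, ∀ r : ℤ, s ≤ r → ψ.eval (r : ℚ) = Module.finrank K (modFil n K M m g r) := by
  refine Iff.trans ?_ eventually_atTop
  rw [← Nat.map_cast_int_atTop, eventually_map, IsBernsteinPolynomial]
  refine eventually_congr (.of_forall fun r => ?_)
  rw [modFil_natCast, Int.cast_natCast, eq_comm]

theorem IsDimensionPolynomial.totalDegree_eq_natDegree {φ : MvPolynomial (Fin p) ℚ}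
    {ψ : Polynomial ℚ} (hφ : IsDimensionPolynomial K B g φ)
    (hψ : IsBernsteinPolynomial (wx n K) (wd n K) (Submodule.span K (Set.range g)) ψ) :
    φ.totalDegree = ψ.natDegree := by
  refine le_antisymm ?_ ?_
  · obtain ⟨a, ha, hdeg⟩ := exists_pos_totalDegree_le_natDegree_restrictLine φ
    obtain ⟨b, hb⟩ := eventually_atTop.1 hψ
    refine hdeg.trans <| natDegree_le_of_eventually_abs_eval_le_comp (∑ j, a j) b ?_
    filter_upwards [hφ.eventually_eval_restrictLine ha] with k hk
    rw [hk, ← hb _ (Nat.le_add_left _ _), ← modFil_natCast, Nat.abs_cast, Nat.abs_cast, Nat.cast_le]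
    refine finrank_modFilB_le_finrank_modFil ?_
    rw [← Finset.sum_mul]
    exact Nat.le_add_right _ _
  · refine le_trans (natDegree_le_of_eventually_abs_eval_le ?_)
      (natDegree_restrictLine_le (fun _ => ((1 : ℕ) : ℚ)) φ)
    filter_upwards [hψ, hφ.eventually_eval_restrictLine fun _ => one_pos] with k hψk hφk
    rw [← hψk, ← modFil_natCast, hφk, Nat.abs_cast, Nat.abs_cast, Nat.cast_le]
    exact finrank_modFil_le_finrank_modFilB fun _ => (one_mul k).ge

theorem isHolonomic_iff_natDegree_eq [CharZero K] [Nontrivial M]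
    (hg : Submodule.span (WeylAlg n K) (Set.range g) = ⊤) {ψ : Polynomial ℚ}
    (hψ : IsBernsteinPolynomial (wx n K) (wd n K) (Submodule.span K (Set.range g)) ψ) :
    IsHolonomic n K M ↔ ψ.natDegree = n := by
  have hspan : Submodule.span (WeylAlg n K) (Submodule.span K (Set.range g) : Set M) = ⊤ :=
    top_unique <| hg.ge.trans <| Submodule.span_mono Submodule.subset_span
  have hfg {k : ℕ} (f : Fin k → M) : (Submodule.span K (Set.range f)).FG :=
    Submodule.fg_span (Set.finite_range f)
  constructor
  · rintro ⟨-, hdeg⟩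
    refine le_antisymm (hdeg m g hg ψ (isBernsteinPolynomial_iff_exists_forall_eval_eq.1 hψ))
      (hψ.le_natDegree (isWeylPair_wx_wd n K) (hfg g) fun hbot => ?_)
    rw [hbot, Submodule.bot_coe, Submodule.span_zero_singleton] at hspan
    exact bot_ne_top hspan
  · rintro hdeg
    refine ⟨.of_fg_top <| hg ▸ Submodule.fg_span (Set.finite_range g), fun k f _ χ hχ => ?_⟩
    rw [← hdeg]
    exact hψ.natDegree_le_of_span_eq_top (adjoin_range_wx_union_range_wd n K)
      (isBernsteinPolynomial_iff_exists_forall_eval_eq.2 hχ) (hfg g) hspan (hfg f)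

end DimensionPolynomial

theorem statement_18_general {n p : ℕ} {K : Type} [Field K] [CharZero K] {B : Fin n → Fin p}
    {M : Type} [AddCommGroup M] [Module K M] [Module (WeylAlg n K) M]
    [IsScalarTower K (WeylAlg n K) M] [Nontrivial M] {m : ℕ} {g : Fin m → M}
    (hgen : Submodule.span (WeylAlg n K) (Set.range g) = ⊤) {φ : MvPolynomial (Fin p) ℚ}
    (hφ : IsDimensionPolynomial K B g φ) : IsHolonomic n K M ↔ φ.totalDegree = n := by
  obtain ⟨ψ, hψ⟩ := (isWeylPair_wx_wd n K).exists_isBernsteinPolynomial (K := K) g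
  rw [isHolonomic_iff_natDegree_eq hgen hψ, hφ.totalDegree_eq_natDegree hψ]

theorem statement_18 (n p : ℕ) (hp : 1 ≤ p) (K : Type) [Field K] [CharZero K]
    (nn : Fin p → ℕ) (hn : ∑ j, nn j = n)
    (B : Fin n → Fin p) (hBmono : Monotone B)
    (hBcard : ∀ j, (Finset.univ.filter fun i => B i = j).card = nn j)
    (M : Type) [AddCommGroup M] [Module K M] [Module (WeylAlg n K) M]
    [IsScalarTower K (WeylAlg n K) M] [Nontrivial M]
    (m : ℕ) (g : Fin m → M)
    (hgen : Submodule.span (WeylAlg n K) (Set.range g) = ⊤)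
    (φ : MvPolynomial (Fin p) ℚ) (hφnum : IsNumerical φ)
    (hφ : ∃ s : Fin p → ℤ, ∀ r : Fin p → ℤ, (∀ i, s i ≤ r i) →
      MvPolynomial.eval (fun i => (r i : ℚ)) φ =
        (Module.finrank K (modFilB n p K B M m g r) : ℚ)) :
    IsHolonomic n K M ↔ φ.totalDegree = n :=
  statement_18_general hgen (eventually_atTop.2 hφ)
end

section
/- Let K be a field of characteristic zero, A_n(K) the Weyl algebra with a fixed partition of {1,…,n} into blocks of sizes n_1,…,n_p, M a finitely generated left A_n(K)-module, and let φ_M(t_1,…,t_p) = Σ_{i_1=0}^{n_1} … Σ_{i_p=0}^{n_p} a_{i_1…i_p} C(t_1+i_1,i_1)⋯C(t_p+i_p,i_p) be the multivariate dimension polynomial associated with a finite system of generators f_1,…,f_m of M, written in canonical form with integer coefficients. Let S(φ_M) = {(i_1,…,i_p) : a_{i_1…i_p} ≠ 0} and let S(φ_M)' be the set of elements of S(φ_M) that are maximal with respect to at least one of the p! lexicographic orders ≤_{j_1,…,j_p} on ℕ^p. Then the total degree d = deg φ_M, the coefficient a_{n_1…n_p}, the set S(φ_M)' together with the corresponding coefficients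 a_{k_1…k_p} for (k_1,…,k_p) ∈ S(φ_M)', and the coefficients of all terms of total degree d, do not depend on the choice of the finite system of generators of M. -/
set_option synthInstance.maxHeartbeats 400000
set_option maxHeartbeats 1000000

open MvPolynomial

/-- The binomial-coefficient polynomial `C(t_j + c, k)` in the variable `t_j`. -/
noncomputable def binomShift {p : ℕ} (j : Fin p) (c : ℤ) (k : ℕ) : MvPolynomial (Fin p) ℚ :=
  (k.factorial : ℚ)⁻¹ • ∏ l ∈ Finset.range k, (X j + MvPolynomial.C ((c : ℚ) - (l : ℚ)))

/-- The lexicographic order on `ℕ^p` determined by a permutation of the coordinates. -/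
def lexLeP {p : ℕ} (π : Equiv.Perm (Fin p)) (u v : Fin p → ℕ) : Prop :=
  u = v ∨ ∃ j : Fin p, u (π j) < v (π j) ∧ ∀ k, k < j → u (π k) = v (π k)

/-- The elements of `S` that are maximal with respect to at least one of the `p!`
lexicographic orders on `ℕ^p`. -/
def lexMaxSet {p : ℕ} (S : Set (Fin p → ℕ)) : Set (Fin p → ℕ) :=
  {v | v ∈ S ∧ ∃ π : Equiv.Perm (Fin p), ∀ u ∈ S, lexLeP π u v}

/-!
The filtrations defined by two finite systems of generators are contained in translates of each
other, so the two dimension polynomials bound each other up to a translation of the variables.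
Restricting both to the curves `tᵢ = xᵢ T ^ wᵢ + cᵢ` and letting `T → ∞` shows, for every positive
weight `w`, that their `w`-weighted degrees agree and that their components of top `w`-weight agree.

The weight `w = 1` gives the total degree, the terms of that degree and the coefficient at the
corner of the box. On a bounded box each lexicographic order is the order of some positive weight,
so a lexicographically maximal exponent is one of top weight. No other canonical term contributes
to the monomial with such an exponent `v`, hence its coefficient is `a_v / ∏ vᵢ!`, which recovers
`a_v`.
-/

section ShiftDominated

open Filter

lemma coeff_prod_sum_of_natDegree_le {ι R : Type*} [CommSemiring R] (s : Finset ι)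
    (f : ι → Polynomial R) (d : ι → ℕ) (hf : ∀ i ∈ s, (f i).natDegree ≤ d i) :
    (∏ i ∈ s, f i).coeff (∑ i ∈ s, d i) = ∏ i ∈ s, (f i).coeff (d i) := by
  classical
  induction s using Finset.induction_on with
  | empty => simp
  | insert i s hi ih =>
    rw [Finset.forall_mem_insert] at hf
    have hs : (∏ j ∈ s, f j).natDegree ≤ ∑ j ∈ s, d j :=
      (Polynomial.natDegree_prod_le s f).trans (Finset.sum_le_sum hf.2)
    rw [Finset.prod_insert hi, Finset.sum_insert hi, Finset.prod_insert hi,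
      Polynomial.coeff_mul_add_eq_of_natDegree_le hf.1 hs, ih hf.2]

/-- The curve `T ↦ (xᵢ T ^ wᵢ + cᵢ)ᵢ`, as a point with polynomial coordinates. Restricting a
polynomial to it isolates the component of top `w`-weight, whatever the translation `c`. -/
noncomputable def weightedCurve {σ R : Type*} [CommSemiring R] (w : σ → ℕ) (x c : σ → R) :
    σ → Polynomial R :=
  fun i => Polynomial.C (x i) * Polynomial.X ^ w i + Polynomial.C (c i)

section weightedCurve

variable {σ R : Type*} [CommSemiring R] (w : σ → ℕ) (x c : σ → R)

lemma natDegree_weightedCurve_pow_le (i : σ) (e : ℕ) :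
    (weightedCurve w x c i ^ e).natDegree ≤ e • w i := by
  refine Polynomial.natDegree_pow_le_of_le e ?_
  exact Polynomial.natDegree_add_le_of_degree_le (Polynomial.natDegree_C_mul_X_pow_le _ _) (by simp)

lemma coeff_weightedCurve_pow {i : σ} (hw : 0 < w i) (e : ℕ) :
    (weightedCurve w x c i ^ e).coeff (e • w i) = x i ^ e := by
  have hdeg : (weightedCurve w x c i).natDegree ≤ w i := by
    simpa using natDegree_weightedCurve_pow_le w x c i 1
  rw [smul_eq_mul, Polynomial.coeff_pow_of_natDegree_le hdeg]
  simp [weightedCurve, Polynomial.coeff_C, hw.ne']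

lemma natDegree_aeval_weightedCurve_monomial_le (u : σ →₀ ℕ) (a : R) :
    (aeval (weightedCurve w x c) (monomial u a)).natDegree ≤ Finsupp.weight w u := by
  rw [aeval_monomial, Finsupp.weight_apply]
  refine (Polynomial.natDegree_C_mul_le _ _).trans ((Polynomial.natDegree_prod_le _ _).trans ?_)
  exact Finset.sum_le_sum fun i _ => natDegree_weightedCurve_pow_le w x c i (u i)

lemma coeff_aeval_weightedCurve_monomial (hw : ∀ i, 0 < w i) (u : σ →₀ ℕ) (a : R) :
    (aeval (weightedCurve w x c) (monomial u a)).coeff (Finsupp.weight w u) =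
      eval x (monomial u a) := by
  rw [aeval_monomial, eval_monomial, Finsupp.weight_apply, Finsupp.sum, Finsupp.prod,
    Polynomial.algebraMap_eq, Polynomial.coeff_C_mul,
    coeff_prod_sum_of_natDegree_le _ _ _ fun i _ => natDegree_weightedCurve_pow_le w x c i (u i)]
  simp only [coeff_weightedCurve_pow w x c (hw _), Finsupp.prod]

variable {w} {φ : MvPolynomial σ R} {D : ℕ}

lemma natDegree_aeval_weightedCurve_le (hφ : weightedTotalDegree w φ ≤ D) :
    (aeval (weightedCurve w x c) φ).natDegree ≤ D := by
  rw [φ.as_sum, map_sum]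
  refine Polynomial.natDegree_sum_le_of_forall_le _ _ fun u hu => ?_
  exact (natDegree_aeval_weightedCurve_monomial_le w x c u _).trans
    ((le_weightedTotalDegree w hu).trans hφ)

lemma coeff_aeval_weightedCurve (hw : ∀ i, 0 < w i) (hφ : weightedTotalDegree w φ ≤ D) :
    (aeval (weightedCurve w x c) φ).coeff D = eval x (weightedHomogeneousComponent w D φ) := by
  conv_lhs => rw [φ.as_sum]
  rw [weightedHomogeneousComponent_apply, map_sum, map_sum, Polynomial.finsetSum_coeff,
    Finset.sum_filter]
  refine Finset.sum_congr rfl fun u hu => ?_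
  split_ifs with huD
  · rw [← huD, coeff_aeval_weightedCurve_monomial w x c hw]
  · have hlt : Finsupp.weight w u < D := ((le_weightedTotalDegree w hu).trans hφ).lt_of_ne huD
    exact Polynomial.coeff_eq_zero_of_natDegree_lt
      ((natDegree_aeval_weightedCurve_monomial_le w x c u _).trans_lt hlt)

lemma eval_aeval_weightedCurve (T : R) :
    (aeval (weightedCurve w x c) φ).eval T = eval (fun i => x i * T ^ w i + c i) φ := by
  have hT : (Polynomial.evalRingHom T).comp (algebraMap R (Polynomial R)) = RingHom.id R :=
    RingHom.ext fun _ => Polynomial.eval_C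
  rw [← Polynomial.coe_evalRingHom, map_aeval, hT, coe_eval₂Hom, eval₂_id]
  simp only [weightedCurve, Polynomial.coe_evalRingHom, Polynomial.eval_add, Polynomial.eval_mul,
    Polynomial.eval_pow, Polynomial.eval_C, Polynomial.eval_X]

end weightedCurve

variable {σ k : Type*} [NormedField k] [LinearOrder k] [IsStrictOrderedRing k] [OrderTopology k]
  [Archimedean k]

lemma coeff_le_coeff_of_eventually_eval_le {P Q : Polynomial k} {D : ℕ} (hP : P.natDegree ≤ D)
    (hQ : Q.natDegree ≤ D) (hPQ : ∀ᶠ T : ℕ in atTop, P.eval (T : k) ≤ Q.eval (T : k)) :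
    P.coeff D ≤ Q.coeff D := by
  by_contra! hlt
  -- The factor `X` makes the degree positive even when `D = 0`.
  set R := Polynomial.X * (Q - P)
  have hcoeff : (Q - P).coeff D < 0 := by simpa using hlt
  have hdeg : (Q - P).natDegree = D :=
    Polynomial.natDegree_eq_of_le_of_coeff_ne_zero
      ((Polynomial.natDegree_sub_le_of_le hQ hP).trans (max_self D).le) hcoeff.ne
  have hne : Q - P ≠ 0 := by
    rintro h
    simp [h] at hcoeff
  have hR : Tendsto (fun T : ℕ => R.eval (T : k)) atTop atBot := by
    refine (Polynomial.tendsto_atBot_of_leadingCoeff_nonpos R ?_ ?_).comp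
      tendsto_natCast_atTop_atTop
    · rw [Polynomial.degree_mul, Polynomial.degree_X, Polynomial.degree_eq_natDegree hne]
      exact_mod_cast Nat.lt_add_right _ one_pos
    · rw [Polynomial.leadingCoeff_mul, Polynomial.leadingCoeff_X, one_mul, Polynomial.leadingCoeff,
        hdeg]
      exact hcoeff.le
  obtain ⟨T, hneg, hle⟩ := ((hR.eventually_lt_atBot 0).and hPQ).exists
  refine hneg.not_ge ?_
  rw [Polynomial.eval_mul, Polynomial.eval_X, Polynomial.eval_sub]
  exact mul_nonneg T.cast_nonneg (sub_nonneg.2 hle)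

/-- `φ` is bounded by a translate of `ψ` at all large integer points. Dimension polynomials of a
module attached to different systems of generators are related in this way. -/
def ShiftDominated (φ ψ : MvPolynomial σ k) : Prop :=
  ∃ c : σ → ℤ, ∀ᶠ r : σ → ℤ in atTop,
    eval (fun i => (r i : k)) φ ≤ eval (fun i => ((r + c) i : k)) ψ

lemma tendsto_mul_natCast_pow_atTop [Finite σ] {w x : σ → ℕ} (hw : ∀ i, 0 < w i)
    (hx : ∀ i, 0 < x i) :
    Tendsto (fun (T : ℕ) (i : σ) => (x i : ℤ) * (T : ℤ) ^ w i) atTop atTop := by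
  refine tendsto_atTop.2 fun s => eventually_all.2 fun i => ?_
  have hpow : Tendsto (fun T : ℕ => (T : ℤ) ^ w i) atTop atTop :=
    (tendsto_pow_atTop (hw i).ne').comp tendsto_natCast_atTop_atTop
  exact (hpow.const_mul_atTop' (by exact_mod_cast hx i)).eventually_ge_atTop (s i)

variable [Finite σ] {φ ψ : MvPolynomial σ k} {w : σ → ℕ} {D : ℕ}

lemma ShiftDominated.eval_weightedHomogeneousComponent_le (hφψ : ShiftDominated φ ψ)
    (hw : ∀ i, 0 < w i) (hφ : weightedTotalDegree w φ ≤ D) (hψ : weightedTotalDegree w ψ ≤ D)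
    {x : σ → ℕ} (hx : ∀ i, 0 < x i) :
    eval (fun i => (x i : k)) (weightedHomogeneousComponent w D φ) ≤
      eval (fun i => (x i : k)) (weightedHomogeneousComponent w D ψ) := by
  obtain ⟨c, hc⟩ := hφψ
  rw [← coeff_aeval_weightedCurve _ 0 hw hφ,
    ← coeff_aeval_weightedCurve _ (fun i => (c i : k)) hw hψ]
  refine coeff_le_coeff_of_eventually_eval_le (natDegree_aeval_weightedCurve_le _ _ hφ)
    (natDegree_aeval_weightedCurve_le _ _ hψ) ?_
  filter_upwards [(tendsto_mul_natCast_pow_atTop hw hx).eventually hc] with T hT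
  simpa [eval_aeval_weightedCurve] using hT

lemma weightedHomogeneousComponent_eq_of_antisymmRel (h : AntisymmRel ShiftDominated φ ψ)
    (hw : ∀ i, 0 < w i) (hφ : weightedTotalDegree w φ ≤ D) (hψ : weightedTotalDegree w ψ ≤ D) :
    weightedHomogeneousComponent w D φ = weightedHomogeneousComponent w D ψ := by
  have hinf : (Set.range fun m : ℕ => ((m + 1 : ℕ) : k)).Infinite :=
    Set.infinite_range_of_injective (Nat.cast_injective.comp (add_left_injective 1))
  refine funext_set _ (fun _ => hinf) fun x hx => ?_
  choose y hy using fun i => hx i trivial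
  obtain rfl : (fun i => ((y i + 1 : ℕ) : k)) = x := funext hy
  exact le_antisymm
    (h.1.eval_weightedHomogeneousComponent_le hw hφ hψ fun _ => Nat.succ_pos _)
    (h.2.eval_weightedHomogeneousComponent_le hw hψ hφ fun _ => Nat.succ_pos _)

lemma weightedTotalDegree_le_of_antisymmRel (h : AntisymmRel ShiftDominated φ ψ)
    (hw : ∀ i, 0 < w i) : weightedTotalDegree w φ ≤ weightedTotalDegree w ψ := by
  by_contra! hlt
  have hφ : φ.support.Nonempty := by
    refine Finset.nonempty_iff_ne_empty.2 fun h0 => ?_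
    simp [weightedTotalDegree, h0] at hlt
  obtain ⟨u, hu, hmax : weightedTotalDegree w φ = _⟩ :=
    φ.support.exists_mem_eq_sup hφ (Finsupp.weight w)
  have hcomp := weightedHomogeneousComponent_eq_of_antisymmRel h hw le_rfl hlt.le
  rw [weightedHomogeneousComponent_eq_zero _ _ hlt] at hcomp
  have hcoeff := congrArg (coeff u) hcomp
  rw [coeff_weightedHomogeneousComponent, if_pos hmax.symm, coeff_zero] at hcoeff
  exact mem_support_iff.1 hu hcoeff

lemma weightedTotalDegree_eq_of_antisymmRel (h : AntisymmRel ShiftDominated φ ψ)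
    (hw : ∀ i, 0 < w i) : weightedTotalDegree w φ = weightedTotalDegree w ψ :=
  (weightedTotalDegree_le_of_antisymmRel h hw).antisymm
    (weightedTotalDegree_le_of_antisymmRel h.symm hw)

lemma coeff_eq_of_antisymmRel (h : AntisymmRel ShiftDominated φ ψ) (hw : ∀ i, 0 < w i)
    {u : σ →₀ ℕ} (hu : weightedTotalDegree w φ ≤ Finsupp.weight w u) :
    coeff u φ = coeff u ψ := by
  have hcomp := weightedHomogeneousComponent_eq_of_antisymmRel h hw hu
    ((weightedTotalDegree_le_of_antisymmRel h.symm hw).trans hu)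
  simpa only [coeff_weightedHomogeneousComponent, if_true] using congrArg (coeff u) hcomp

end ShiftDominated

section CanonicalRep

lemma coeff_prod_aeval_X {σ R : Type*} [Fintype σ] [CommSemiring R] (P : σ → Polynomial R)
    (u : σ →₀ ℕ) : coeff u (∏ i, Polynomial.aeval (X i) (P i)) = ∏ i, (P i).coeff (u i) := by
  classical
  have hsum (i : σ) : Polynomial.aeval (X i : MvPolynomial σ R) (P i) =
      ∑ e ∈ (P i).support, C ((P i).coeff e) * X i ^ e := by
    rw [Polynomial.aeval_def, Polynomial.eval₂_eq_sum, Polynomial.sum, algebraMap_eq]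
  have hmonomial (f : σ → ℕ) :
      (∏ i, C ((P i).coeff (f i)) * X i ^ f i : MvPolynomial σ R) =
        monomial (Finsupp.equivFunOnFinite.symm f) (∏ i, (P i).coeff (f i)) := by
    rw [Finset.prod_mul_distrib, monomial_eq, Finsupp.prod_fintype _ _ (by simp), map_prod]
    rfl
  simp only [hsum, Finset.prod_univ_sum, coeff_sum, hmonomial, coeff_monomial]
  rw [Finset.sum_eq_single ⇑u]
  · simp
  · exact fun f _ hf => if_neg fun h => hf (by rw [← h]; rfl)
  · intro hu
    obtain ⟨i, hi⟩ : ∃ i, (P i).coeff (u i) = 0 := by simpa using hu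
    rw [if_pos (by simp), Finset.prod_eq_zero (Finset.mem_univ i) hi]

/-- The binomial polynomial `C(T + c, k)` in one variable `T`, of which `binomShift` is the copy in
the variable `t_j`. -/
noncomputable def shiftedBinomial (c : ℤ) (k : ℕ) : Polynomial ℚ :=
  (k.factorial : ℚ)⁻¹ •
    ∏ l ∈ Finset.range k, (Polynomial.X + Polynomial.C ((c : ℚ) - (l : ℚ)))

lemma aeval_X_shiftedBinomial {p : ℕ} (j : Fin p) (c : ℤ) (k : ℕ) :
    Polynomial.aeval (X j) (shiftedBinomial c k) = binomShift j c k := by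
  simp [shiftedBinomial, binomShift]

lemma natDegree_shiftedBinomial_le (c : ℤ) (k : ℕ) : (shiftedBinomial c k).natDegree ≤ k := by
  refine (Polynomial.natDegree_smul_le _ _).trans ((Polynomial.natDegree_prod_le _ _).trans ?_)
  simp only [Polynomial.natDegree_X_add_C, Finset.sum_const, Finset.card_range, smul_eq_mul,
    mul_one, le_refl]

lemma coeff_shiftedBinomial (c : ℤ) (k : ℕ) :
    (shiftedBinomial c k).coeff k = (k.factorial : ℚ)⁻¹ := by
  have h := coeff_prod_sum_of_natDegree_le (Finset.range k)
    (fun l : ℕ => Polynomial.X + Polynomial.C ((c : ℚ) - (l : ℚ))) (fun _ => 1)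
    fun _ _ => (Polynomial.natDegree_X_add_C _).le
  have hone (a : ℚ) : (Polynomial.X + Polynomial.C a).coeff 1 = 1 := by simp
  simp only [hone, Finset.sum_const, Finset.card_range, smul_eq_mul, mul_one,
    Finset.prod_const_one] at h
  rw [shiftedBinomial, Polynomial.coeff_smul, h, smul_eq_mul, mul_one]

variable {p : ℕ}

lemma coeff_prod_binomShift (v : Fin p → ℕ) (u : Fin p →₀ ℕ) :
    coeff u (∏ i, binomShift i (v i : ℤ) (v i)) =
      ∏ i, (shiftedBinomial (v i : ℤ) (v i)).coeff (u i) := by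
  simp_rw [← aeval_X_shiftedBinomial, coeff_prod_aeval_X]

lemma le_of_coeff_prod_binomShift_ne_zero {v : Fin p → ℕ} {u : Fin p →₀ ℕ}
    (h : coeff u (∏ i, binomShift i (v i : ℤ) (v i)) ≠ 0) : ⇑u ≤ v := by
  rw [coeff_prod_binomShift, Finset.prod_ne_zero_iff] at h
  exact fun i => (Polynomial.le_natDegree_of_ne_zero (h i (Finset.mem_univ i))).trans
    (natDegree_shiftedBinomial_le _ _)

lemma coeff_prod_binomShift_self (v : Fin p → ℕ) :
    coeff (Finsupp.equivFunOnFinite.symm v) (∏ i, binomShift i (v i : ℤ) (v i)) =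
      ∏ i, ((v i).factorial : ℚ)⁻¹ := by
  simp [coeff_prod_binomShift, coeff_shiftedBinomial]

/-- `a` is the coefficient function of the canonical representation
`φ = ∑ a_v C(t₁ + v₁, v₁) ⋯ C(t_p + v_p, v_p)`, with `v` ranging over the box `v ≤ N`. -/
structure IsCanonicalRep (N : Fin p → ℕ) (a : (Fin p → ℕ) → ℤ) (φ : MvPolynomial (Fin p) ℚ) :
    Prop where
  eq_zero : ∀ v : Fin p → ℕ, (∃ i, N i < v i) → a v = 0
  eq_sum : φ = ∑ v ∈ Fintype.piFinset (fun i => Finset.range (N i + 1)),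
    (a v : ℚ) • ∏ i, binomShift i (v i : ℤ) (v i)

lemma weight_equivFunOnFinite_symm {σ : Type*} [Fintype σ] (w v : σ → ℕ) :
    Finsupp.weight w (Finsupp.equivFunOnFinite.symm v) = v ⬝ᵥ w := by
  simp [Finsupp.weight_eq_sum, dotProduct]

namespace IsCanonicalRep

variable {N : Fin p → ℕ} {a b : (Fin p → ℕ) → ℤ} {φ ψ : MvPolynomial (Fin p) ℚ}

lemma le_of_ne_zero (ha : IsCanonicalRep N a φ) {v : Fin p → ℕ} (hv : a v ≠ 0) : v ≤ N :=
  fun i => not_lt.1 fun hi => hv (ha.eq_zero v ⟨i, hi⟩)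

lemma coeff_eq_sum (ha : IsCanonicalRep N a φ) (u : Fin p →₀ ℕ) :
    coeff u φ = ∑ v ∈ Fintype.piFinset (fun i => Finset.range (N i + 1)),
      (a v : ℚ) * coeff u (∏ i, binomShift i (v i : ℤ) (v i)) := by
  conv_lhs => rw [ha.eq_sum, coeff_sum]
  simp only [coeff_smul, smul_eq_mul]

lemma exists_le_of_coeff_ne_zero (ha : IsCanonicalRep N a φ) {u : Fin p →₀ ℕ}
    (hu : coeff u φ ≠ 0) : ∃ v, a v ≠ 0 ∧ ⇑u ≤ v := by
  rw [ha.coeff_eq_sum] at hu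
  obtain ⟨v, -, hv⟩ := Finset.exists_ne_zero_of_sum_ne_zero hu
  exact ⟨v, Int.cast_ne_zero.1 (left_ne_zero_of_mul hv),
    le_of_coeff_prod_binomShift_ne_zero (right_ne_zero_of_mul hv)⟩

lemma coeff_eq (ha : IsCanonicalRep N a φ) {v : Fin p → ℕ} (hv : ∀ v', v < v' → a v' = 0) :
    coeff (Finsupp.equivFunOnFinite.symm v) φ = a v * ∏ i, ((v i).factorial : ℚ)⁻¹ := by
  rw [ha.coeff_eq_sum, Finset.sum_eq_single v, coeff_prod_binomShift_self]
  · intro v' _ hne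
    by_contra h
    have hle : v ≤ v' := le_of_coeff_prod_binomShift_ne_zero (right_ne_zero_of_mul h)
    exact left_ne_zero_of_mul h (by rw [hv v' (hle.lt_of_ne' hne), Int.cast_zero])
  · intro hnot
    obtain ⟨i, hi⟩ : ∃ i, N i + 1 ≤ v i := by simpa using hnot
    rw [ha.eq_zero v ⟨i, hi⟩, Int.cast_zero, zero_mul]

lemma weightedTotalDegree_le_iff (ha : IsCanonicalRep N a φ) {w : Fin p → ℕ} {D : ℕ} :
    weightedTotalDegree w φ ≤ D ↔ ∀ v, a v ≠ 0 → v ⬝ᵥ w ≤ D := by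
  constructor
  · intro hD v hv
    have hfin : {v | a v ≠ 0}.Finite := (Set.finite_Iic N).subset fun _ => ha.le_of_ne_zero
    obtain ⟨v', hvv', hmax⟩ := hfin.exists_le_maximal hv
    have hcoeff := ha.coeff_eq fun v'' hlt => not_not.1 fun h => hmax.not_prop_of_gt hlt h
    have hsupp : Finsupp.equivFunOnFinite.symm v' ∈ φ.support := by
      rw [mem_support_iff, hcoeff]
      exact mul_ne_zero (Int.cast_ne_zero.2 hmax.prop)
        (Finset.prod_ne_zero_iff.2 fun i _ => by positivity)
    calc v ⬝ᵥ w ≤ v' ⬝ᵥ w := dotProduct_le_dotProduct_of_nonneg_right hvv' zero_le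
      _ = Finsupp.weight w (Finsupp.equivFunOnFinite.symm v') :=
        (weight_equivFunOnFinite_symm w v').symm
      _ ≤ D := (le_weightedTotalDegree w hsupp).trans hD
  · intro h
    refine Finset.sup_le fun u hu => ?_
    obtain ⟨v, hv, huv⟩ := ha.exists_le_of_coeff_ne_zero (mem_support_iff.1 hu)
    rw [← Finsupp.equivFunOnFinite_symm_coe u, weight_equivFunOnFinite_symm]
    exact (dotProduct_le_dotProduct_of_nonneg_right huv zero_le).trans (h v hv)

lemma coeff_eq_of_weightedTotalDegree_le (ha : IsCanonicalRep N a φ) {w : Fin p → ℕ}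
    (hw : ∀ i, 0 < w i) {v : Fin p → ℕ} (hv : weightedTotalDegree w φ ≤ v ⬝ᵥ w) :
    coeff (Finsupp.equivFunOnFinite.symm v) φ = a v * ∏ i, ((v i).factorial : ℚ)⁻¹ := by
  refine ha.coeff_eq fun v' hlt => not_not.1 fun hv' => ?_
  obtain ⟨hle, i, hi⟩ := Pi.lt_def.1 hlt
  have hlt : v ⬝ᵥ w < v' ⬝ᵥ w :=
    Finset.sum_lt_sum (fun j _ => Nat.mul_le_mul_right _ (hle j))
      ⟨i, Finset.mem_univ i, Nat.mul_lt_mul_of_pos_right hi (hw i)⟩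
  exact hlt.not_ge ((ha.weightedTotalDegree_le_iff.1 le_rfl v' hv').trans hv)

lemma apply_eq_of_antisymmRel (ha : IsCanonicalRep N a φ) (hb : IsCanonicalRep N b ψ)
    (h : AntisymmRel ShiftDominated φ ψ) {w : Fin p → ℕ} (hw : ∀ i, 0 < w i) {v : Fin p → ℕ}
    (hv : weightedTotalDegree w φ ≤ v ⬝ᵥ w) : a v = b v := by
  have hv' : weightedTotalDegree w ψ ≤ v ⬝ᵥ w :=
    (weightedTotalDegree_eq_of_antisymmRel h hw).ge.trans hv
  have hcoeff := coeff_eq_of_antisymmRel h hw (hv.trans_eq (weight_equivFunOnFinite_symm w v).symm)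
  rw [ha.coeff_eq_of_weightedTotalDegree_le hw hv, hb.coeff_eq_of_weightedTotalDegree_le hw hv']
    at hcoeff
  have hfact : ∏ i, ((v i).factorial : ℚ)⁻¹ ≠ 0 :=
    Finset.prod_ne_zero_iff.2 fun i _ => by positivity
  exact_mod_cast mul_right_cancel₀ hfact hcoeff

lemma apply_box_eq_of_antisymmRel (ha : IsCanonicalRep N a φ) (hb : IsCanonicalRep N b ψ)
    (h : AntisymmRel ShiftDominated φ ψ) : a N = b N :=
  ha.apply_eq_of_antisymmRel hb h (w := 1) (fun _ => one_pos) <|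
    ha.weightedTotalDegree_le_iff.2 fun _ hv =>
      dotProduct_le_dotProduct_of_nonneg_right (ha.le_of_ne_zero hv) zero_le

end IsCanonicalRep

end CanonicalRep

section LexOrder

variable {p : ℕ} {M : ℕ}

lemma lexLeP_iff (π : Equiv.Perm (Fin p)) (u v : Fin p → ℕ) :
    lexLeP π u v ↔ toLex (u ∘ π) ≤ toLex (v ∘ π) := by
  rw [le_iff_eq_or_lt, toLex_inj, π.surjective.injective_comp_right.eq_iff]
  exact or_congr_right (exists_congr fun _ => and_comm)

/-- Weights reproducing the lexicographic order on the box `[0, M] ^ p`: each exceeds `M` times the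
sum of the later ones. -/
def lexWeight (p M : ℕ) : Fin p → ℕ :=
  fun k => (p * M + 1) ^ (p - k : ℕ)

lemma lexWeight_pos (k : Fin p) : 0 < lexWeight p M k :=
  Nat.pow_pos (Nat.succ_pos _)

lemma dotProduct_lexWeight_lt {a b : Fin p → ℕ} (ha : ∀ i, a i ≤ M) (hab : toLex a < toLex b) :
    a ⬝ᵥ lexWeight p M < b ⬝ᵥ lexWeight p M := by
  obtain ⟨j, heq, hlt⟩ := hab
  change ∀ k, k < j → a k = b k at heq
  change a j < b j at hlt
  set w := lexWeight p M
  set e := (p * M + 1) ^ (p - j - 1 : ℕ)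
  have hwj : w j = (p * M + 1) * e := by
    simp only [w, e, lexWeight, ← pow_succ']
    congr 1
    omega
  have hterm (k : Fin p) : a k * w k + (if k = j then w j else 0) ≤ b k * w k + M * e := by
    rcases lt_trichotomy k j with hkj | rfl | hjk
    · simp [heq k hkj, hkj.ne]
    · calc a k * w k + (if k = k then w k else 0) = (a k + 1) * w k := by simp; ring
        _ ≤ b k * w k := Nat.mul_le_mul_right _ hlt
        _ ≤ _ := Nat.le_add_right _ _
    · have hwk : w k ≤ e := Nat.pow_le_pow_right (Nat.succ_pos _) (by omega)
      calc a k * w k + (if k = j then w j else 0) = a k * w k := by simp [hjk.ne']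
        _ ≤ M * e := Nat.mul_le_mul (ha k) hwk
        _ ≤ _ := Nat.le_add_left _ _
  have hsum : a ⬝ᵥ w + w j ≤ b ⬝ᵥ w + p * (M * e) := by
    simpa [Finset.sum_add_distrib, dotProduct] using
      Finset.sum_le_sum fun k (_ : k ∈ Finset.univ) => hterm k
  have he : 0 < e := Nat.pow_pos (Nat.succ_pos _)
  linarith [mul_assoc p M e]

lemma lexLeP_iff_dotProduct_lexWeight_le (π : Equiv.Perm (Fin p)) {u v : Fin p → ℕ}
    (hu : ∀ i, u i ≤ M) (hv : ∀ i, v i ≤ M) :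
    lexLeP π u v ↔ u ⬝ᵥ lexWeight p M ∘ π.symm ≤ v ⬝ᵥ lexWeight p M ∘ π.symm := by
  have hmono : StrictMonoOn (fun a : Lex (Fin p → ℕ) => ofLex a ⬝ᵥ lexWeight p M)
      {a | ∀ i, ofLex a i ≤ M} :=
    fun a ha b _ hab => dotProduct_lexWeight_lt ha hab
  rw [lexLeP_iff, dotProduct_comp_equiv_symm, dotProduct_comp_equiv_symm]
  exact (hmono.le_iff_le (fun i => hu (π i)) fun i => hv (π i)).symm

namespace IsCanonicalRep

variable {N : Fin p → ℕ} {a b : (Fin p → ℕ) → ℤ} {φ ψ : MvPolynomial (Fin p) ℚ}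

lemma mem_lexMaxSet_iff (ha : IsCanonicalRep N a φ) (hM : ∀ i, N i ≤ M) {v : Fin p → ℕ} :
    v ∈ lexMaxSet {v | a v ≠ 0} ↔ a v ≠ 0 ∧ ∃ π : Equiv.Perm (Fin p),
      weightedTotalDegree (lexWeight p M ∘ π.symm) φ ≤ v ⬝ᵥ lexWeight p M ∘ π.symm := by
  refine and_congr_right fun hv => exists_congr fun π => ?_
  rw [ha.weightedTotalDegree_le_iff]
  refine forall₂_congr fun u hu => lexLeP_iff_dotProduct_lexWeight_le π ?_ ?_
  · exact fun i => (ha.le_of_ne_zero hu i).trans (hM i)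
  · exact fun i => (ha.le_of_ne_zero hv i).trans (hM i)

lemma apply_eq_of_mem_lexMaxSet (ha : IsCanonicalRep N a φ) (hb : IsCanonicalRep N b ψ)
    (h : AntisymmRel ShiftDominated φ ψ) {v : Fin p → ℕ} (hv : v ∈ lexMaxSet {v | a v ≠ 0}) :
    a v = b v := by
  obtain ⟨M, hM⟩ := Finite.exists_le N
  obtain ⟨-, π, hπ⟩ := (ha.mem_lexMaxSet_iff hM).1 hv
  exact ha.apply_eq_of_antisymmRel hb h (fun _ => lexWeight_pos _) hπ

lemma lexMaxSet_subset (ha : IsCanonicalRep N a φ) (hb : IsCanonicalRep N b ψ)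
    (h : AntisymmRel ShiftDominated φ ψ) :
    lexMaxSet {v | a v ≠ 0} ⊆ lexMaxSet {v | b v ≠ 0} := by
  intro v hv
  obtain ⟨M, hM⟩ := Finite.exists_le N
  obtain ⟨hav, π, hπ⟩ := (ha.mem_lexMaxSet_iff hM).1 hv
  refine (hb.mem_lexMaxSet_iff hM).2 ⟨?_, π, ?_⟩
  · rwa [← ha.apply_eq_of_mem_lexMaxSet hb h hv]
  · exact (weightedTotalDegree_eq_of_antisymmRel h fun _ => lexWeight_pos _).ge.trans hπ

end IsCanonicalRep

end LexOrder

section Multifiltration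

variable {σ K A : Type*} [Field K] [Semiring A] [Algebra K A]

/-- An exhaustive filtration of the algebra `A` by finite-dimensional subspaces `W r` indexed by
integer vectors `r`; the model is the filtration of the Weyl algebra by the orders with respect to
`p` blocks of variables. -/
structure IsMultifiltration (W : (σ → ℤ) → Submodule K A) : Prop where
  mono : Monotone W
  mul_mem {r s : σ → ℤ} {D E : A} : D ∈ W r → E ∈ W s → D * E ∈ W (r + s)
  exists_mem (D : A) : ∃ r, D ∈ W r
  finite (r : σ → ℤ) : Module.Finite K (W r)

variable {M : Type*} [AddCommGroup M] [Module K M] [Module A M]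

/-- The filtration `r ↦ ∑ᵢ W r • gᵢ` of a module induced by a family `g` of its elements. -/
def inducedFiltration {ι : Type*} (W : (σ → ℤ) → Submodule K A) (g : ι → M) (r : σ → ℤ) :
    Submodule K M :=
  Submodule.span K {x | ∃ i, ∃ D ∈ W r, x = D • g i}

variable {ι κ : Type*} {W : (σ → ℤ) → Submodule K A}

lemma IsMultifiltration.exists_inducedFiltration_le (hW : IsMultifiltration W) [Finite ι]
    [Finite κ] (g : ι → M) {h : κ → M} (hh : Submodule.span A (Set.range h) = ⊤) :
    ∃ c, ∀ r, inducedFiltration W g r ≤ inducedFiltration W h (r + c) := by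
  cases nonempty_fintype κ
  have hgen (i : ι) : ∃ E : κ → A, ∑ j, E j • h j = g i :=
    (Submodule.mem_span_range_iff_exists_fun A).1 (hh ▸ Submodule.mem_top)
  choose E hE using hgen
  choose d hd using fun ij : ι × κ => hW.exists_mem (E ij.1 ij.2)
  obtain ⟨c, hc⟩ := Finite.exists_le d
  refine ⟨c, fun r => Submodule.span_le.2 ?_⟩
  rintro _ ⟨i, D, hD, rfl⟩
  rw [← hE i, Finset.smul_sum]
  refine Submodule.sum_mem _ fun j _ => Submodule.subset_span ⟨j, D * E i j, ?_, ?_⟩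
  · exact hW.mul_mem hD (hW.mono (hc (i, j)) (hd (i, j)))
  · rw [mul_smul]

variable [IsScalarTower K A M]

lemma inducedFiltration_eq_iSup (g : ι → M) (r : σ → ℤ) :
    inducedFiltration W g r =
      ⨆ i, (W r).map ((LinearMap.toSpanSingleton A M (g i)).restrictScalars K) := by
  apply le_antisymm
  · refine Submodule.span_le.2 ?_
    rintro _ ⟨i, D, hD, rfl⟩
    exact Submodule.mem_iSup_of_mem i (Submodule.mem_map_of_mem hD)
  · refine iSup_le fun i => ?_
    rintro _ ⟨D, hD, rfl⟩
    exact Submodule.subset_span ⟨i, D, hD, rfl⟩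

namespace IsMultifiltration

lemma finite_inducedFiltration (hW : IsMultifiltration W) [Finite ι] (g : ι → M) (r : σ → ℤ) :
    Module.Finite K (inducedFiltration W g r) := by
  have := hW.finite r
  rw [inducedFiltration_eq_iSup]
  infer_instance

variable {k : Type*} [NormedField k] [LinearOrder k] [IsStrictOrderedRing k]

lemma shiftDominated (hW : IsMultifiltration W) [Finite ι] [Finite κ] {g : ι → M} {h : κ → M}
    (hh : Submodule.span A (Set.range h) = ⊤) {φ ψ : MvPolynomial σ k}
    (hφ : ∀ᶠ r : σ → ℤ in Filter.atTop,
      eval (fun i => (r i : k)) φ = Module.finrank K (inducedFiltration W g r))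
    (hψ : ∀ᶠ r : σ → ℤ in Filter.atTop,
      eval (fun i => (r i : k)) ψ = Module.finrank K (inducedFiltration W h r)) :
    ShiftDominated φ ψ := by
  obtain ⟨c, hc⟩ := hW.exists_inducedFiltration_le g hh
  refine ⟨c, ?_⟩
  filter_upwards [hφ, (Filter.tendsto_atTop_add_const_right _ c Filter.tendsto_id).eventually hψ]
    with r hr hrc
  have := hW.finite_inducedFiltration h (r + c)
  rw [hr]
  refine le_of_le_of_eq ?_ hrc.symm
  exact_mod_cast Submodule.finrank_mono (hc r)

end IsMultifiltration

end Multifiltration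

section WeylAlgebra

lemma list_prod_map_mul_of_commute {ι R : Type*} [Monoid R] {f g : ι → R}
    (hfg : ∀ i j, Commute (f i) (g j)) (l : List ι) :
    (l.map fun i => f i * g i).prod = (l.map f).prod * (l.map g).prod := by
  induction l with
  | nil => simp
  | cons i l ih =>
    have hcomm : Commute (g i) (l.map f).prod :=
      Commute.list_prod_right _ _ (by simpa using fun j _ => (hfg j i).symm)
    simp only [List.map_cons, List.prod_cons, ih]
    rw [mul_assoc, ← mul_assoc (g i), hcomm.eq, mul_assoc, mul_assoc]

lemma prod_finRange_pow_add_single {n : ℕ} {R : Type*} [Monoid R] {a : Fin n → R}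
    (ha : ∀ i j, Commute (a i) (a j)) (i : Fin n) (α : Fin n → ℕ) :
    ((List.finRange n).map fun k => a k ^ (α + Pi.single i 1 : Fin n → ℕ) k).prod =
      a i * ((List.finRange n).map fun k => a k ^ α k).prod := by
  rw [add_comm α]
  simp only [Pi.add_apply, pow_add]
  rw [list_prod_map_mul_of_commute fun j k => (ha j k).pow_pow _ _,
    List.prod_map_eq_pow_single i]
  · rw [Pi.single_eq_same, pow_one, (List.nodup_finRange n).count, if_pos (List.mem_finRange i),
      pow_one]
  · intro j hj _
    simp [hj]

lemma induction_add_single {ι : Type*} [Finite ι] [DecidableEq ι] {P : (ι → ℕ) → Prop}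
    (zero : P 0) (add_single : ∀ i α, P α → P (α + Pi.single i 1)) (α : ι → ℕ) : P α := by
  suffices h : ∀ β, P β → P (β + α) by simpa using h 0 zero
  induction α using Pi.single_induction with
  | zero => simp
  | add f g hf hg => exact fun β hβ => add_assoc β f g ▸ hg _ (hf β hβ)
  | single i m =>
    intro β hβ
    induction m with
    | zero => simpa using hβ
    | succ m ih => simpa [Pi.single_add, ← add_assoc] using add_single i _ ih

variable {n p : ℕ} {K : Type} [Field K]

lemma commute_wx (i j : Fin n) : Commute (wx n K i) (wx n K j) :=
  Subtype.ext (LinearMap.ext fun f => by simp [wx, mul_left_comm])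

lemma commute_wd (i j : Fin n) : Commute (wd n K i) (wd n K j) := by
  have hbracket : ⁅(pderiv i : Derivation K (MvPolynomial (Fin n) K) (MvPolynomial (Fin n) K)),
      (pderiv j : Derivation K (MvPolynomial (Fin n) K) (MvPolynomial (Fin n) K))⁆ = 0 :=
    MvPolynomial.derivation_ext fun k => by
      simp [Derivation.commutator_apply, pderiv_X, Pi.single_apply, apply_ite]
  refine Subtype.ext (LinearMap.ext fun f => ?_)
  have hf := DFunLike.congr_fun hbracket f
  simp only [Derivation.commutator_apply, Derivation.zero_apply, sub_eq_zero] at hf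
  simpa [wd] using hf

lemma wd_mul_wx (i j : Fin n) :
    wd n K i * wx n K j = wx n K j * wd n K i + if i = j then 1 else 0 := by
  refine Subtype.ext (LinearMap.ext fun f => ?_)
  obtain rfl | hij := eq_or_ne i j
  · simp [wd, wx]
  · simp [wd, wx, pderiv_X_of_ne hij.symm, hij]

lemma wx_mul_wMono (i : Fin n) (α β : Fin n → ℕ) :
    wx n K i * wMono n K α β = wMono n K (α + Pi.single i 1) β := by
  rw [wMono, wMono, prod_finRange_pow_add_single commute_wx, mul_assoc]

lemma wd_mul_wMono_zero (i : Fin n) (β : Fin n → ℕ) :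
    wd n K i * wMono n K 0 β = wMono n K 0 (β + Pi.single i 1) := by
  simp only [wMono, prod_finRange_pow_add_single commute_wd, Pi.zero_apply, pow_zero,
    List.map_const', List.prod_replicate, one_pow, one_mul]

/-- The vector of orders of `x ^ α ∂ ^ β` with respect to the blocks of `B`, with integer entries so
that it can index the filtration `bernWB`. -/
def multiOrd (B : Fin n → Fin p) (α β : Fin n → ℕ) : Fin p → ℤ :=
  fun j => ordBlk B α β j

variable (B : Fin n → Fin p)

lemma multiOrd_zero : multiOrd B 0 0 = 0 := by
  ext
  simp [multiOrd, ordBlk]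

lemma multiOrd_add_single_left (α β : Fin n → ℕ) (i : Fin n) :
    multiOrd B (α + Pi.single i 1) β = multiOrd B α β + Pi.single (B i) 1 := by
  ext j
  simp [multiOrd, ordBlk, Finset.sum_add_distrib, Pi.single_apply, eq_comm]
  ring

lemma multiOrd_add_single_right (α β : Fin n → ℕ) (i : Fin n) :
    multiOrd B α (β + Pi.single i 1) = multiOrd B α β + Pi.single (B i) 1 := by
  ext j
  simp [multiOrd, ordBlk, Finset.sum_add_distrib, Pi.single_apply, eq_comm]
  ring

variable {B}

lemma bernWB_mono : Monotone (bernWB n p K B) := by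
  intro r s hrs
  refine Submodule.span_mono ?_
  rintro _ ⟨α, β, hr, rfl⟩
  exact ⟨α, β, fun j => (hr j).trans (hrs j), rfl⟩

lemma wMono_mem_bernWB (α β : Fin n → ℕ) : wMono n K α β ∈ bernWB n p K B (multiOrd B α β) :=
  Submodule.subset_span ⟨α, β, fun _ => le_rfl, rfl⟩

variable (B) in
/-- Left multiplication by `D` raises the orders by at most `s`. Unlike the condition
`D ∈ bernWB n p K B s` that it characterizes, it is visibly stable under products. -/
def RaisesOrderBy (D : WeylAlg n K) (s : Fin p → ℤ) : Prop :=
  ∀ ⦃r : Fin p → ℤ⦄ ⦃E : WeylAlg n K⦄,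
    E ∈ bernWB n p K B r → D * E ∈ bernWB n p K B (r + s)

namespace RaisesOrderBy

variable {D E : WeylAlg n K} {s t : Fin p → ℤ}

lemma mul (hD : RaisesOrderBy B D s) (hE : RaisesOrderBy B E t) :
    RaisesOrderBy B (D * E) (s + t) := by
  intro r F hF
  rw [mul_assoc, add_comm s, ← add_assoc]
  exact hD (hE hF)

lemma of_mul_wMono_mem
    (h : ∀ α β, D * wMono n K α β ∈ bernWB n p K B (multiOrd B α β + s)) :
    RaisesOrderBy B D s := by
  intro r E hE
  suffices hle : bernWB n p K B r ≤ (bernWB n p K B (r + s)).comap (LinearMap.mulLeft K D) from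
    hle hE
  refine Submodule.span_le.2 ?_
  rintro _ ⟨α, β, hr, rfl⟩
  exact bernWB_mono (add_le_add_left hr s) (h α β)

end RaisesOrderBy

lemma raisesOrderBy_wx (i : Fin n) : RaisesOrderBy B (wx n K i) (Pi.single (B i) 1) := by
  refine .of_mul_wMono_mem fun α β => ?_
  rw [wx_mul_wMono, ← multiOrd_add_single_left]
  exact wMono_mem_bernWB _ _

lemma raisesOrderBy_wd (i : Fin n) : RaisesOrderBy B (wd n K i) (Pi.single (B i) 1) := by
  refine .of_mul_wMono_mem fun α β => ?_
  induction α using induction_add_single with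
  | zero =>
    rw [wd_mul_wMono_zero, ← multiOrd_add_single_right]
    exact wMono_mem_bernWB _ _
  | add_single k α ih =>
    rw [← wx_mul_wMono, ← mul_assoc, wd_mul_wx, add_mul, mul_assoc, multiOrd_add_single_left,
      add_right_comm]
    refine Submodule.add_mem _ (raisesOrderBy_wx k ih) ?_
    split_ifs
    · rw [one_mul]
      refine bernWB_mono ?_ (wMono_mem_bernWB α β)
      rw [add_assoc]
      exact le_add_of_nonneg_right (add_nonneg (Pi.single_nonneg.2 zero_le_one)
        (Pi.single_nonneg.2 zero_le_one))
    · rw [zero_mul]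
      exact Submodule.zero_mem _

lemma raisesOrderBy_wMono (α β : Fin n → ℕ) :
    RaisesOrderBy B (wMono n K α β) (multiOrd B α β) := by
  induction α using induction_add_single with
  | zero =>
    induction β using induction_add_single with
    | zero =>
      intro r E hE
      simpa [wMono, multiOrd_zero] using hE
    | add_single i β ih =>
      rw [← wd_mul_wMono_zero, multiOrd_add_single_right, add_comm]
      exact (raisesOrderBy_wd i).mul ih
  | add_single i α ih =>
    rw [← wx_mul_wMono, multiOrd_add_single_left, add_comm]
    exact (raisesOrderBy_wx i).mul ih

lemma mul_mem_bernWB {r s : Fin p → ℤ} {D E : WeylAlg n K} (hD : D ∈ bernWB n p K B r)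
    (hE : E ∈ bernWB n p K B s) : D * E ∈ bernWB n p K B (r + s) := by
  suffices hle : bernWB n p K B r ≤ (bernWB n p K B (r + s)).comap (LinearMap.mulRight K E) from
    hle hD
  refine Submodule.span_le.2 ?_
  rintro _ ⟨α, β, hr, rfl⟩
  rw [add_comm r]
  exact bernWB_mono (add_le_add_right hr s) (raisesOrderBy_wMono α β hE)

lemma one_mem_bernWB_zero : (1 : WeylAlg n K) ∈ bernWB n p K B 0 := by
  simpa [wMono, multiOrd_zero] using wMono_mem_bernWB (K := K) (B := B) 0 0

lemma exists_mem_bernWB (D : WeylAlg n K) : ∃ r, D ∈ bernWB n p K B r := by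
  obtain ⟨D, hD⟩ := D
  induction hD using Algebra.adjoin_induction with
  | mem D hD =>
    obtain ⟨i, rfl⟩ | ⟨i, rfl⟩ := hD
    · exact ⟨_, mul_one (wx n K i) ▸ raisesOrderBy_wx i one_mem_bernWB_zero⟩
    · exact ⟨_, mul_one (wd n K i) ▸ raisesOrderBy_wd i one_mem_bernWB_zero⟩
  | algebraMap a =>
    refine ⟨0, ?_⟩
    have h := (bernWB n p K B 0).smul_mem a one_mem_bernWB_zero
    rwa [← Algebra.algebraMap_eq_smul_one] at h
  | add D E hD hE ihD ihE =>
    obtain ⟨⟨r, hr⟩, s, hs⟩ := And.intro ihD ihE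
    exact ⟨r ⊔ s, Submodule.add_mem _ (bernWB_mono le_sup_left hr) (bernWB_mono le_sup_right hs)⟩
  | mul D E hD hE ihD ihE =>
    obtain ⟨⟨r, hr⟩, s, hs⟩ := And.intro ihD ihE
    exact ⟨r + s, mul_mem_bernWB hr hs⟩

lemma finite_bernWB (r : Fin p → ℤ) : Module.Finite K (bernWB n p K B r) := by
  have hbox := Set.finite_Iic (fun i => (r (B i)).toNat : Fin n → ℕ)
  refine Module.Finite.span_of_finite K
    (((hbox.prod hbox).image fun γ => wMono n K γ.1 γ.2).subset ?_)
  rintro _ ⟨α, β, hr, rfl⟩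
  have hbound (i : Fin n) : α i + β i ≤ (r (B i)).toNat := by
    have hsum : α i + β i ≤ ordBlk B α β (B i) :=
      Finset.single_le_sum (f := fun i => α i + β i) (fun _ _ => Nat.zero_le _) (by simp)
    have := hr (B i)
    omega
  exact ⟨(α, β), ⟨fun i => (Nat.le_add_right _ _).trans (hbound i),
    fun i => (Nat.le_add_left _ _).trans (hbound i)⟩, rfl⟩

lemma isMultifiltration_bernWB (B : Fin n → Fin p) : IsMultifiltration (bernWB n p K B) where
  mono := bernWB_mono
  mul_mem := mul_mem_bernWB
  exists_mem := exists_mem_bernWB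
  finite := finite_bernWB

end WeylAlgebra

theorem statement_19_general {p : ℕ} {K A M : Type*} [Field K] [Semiring A] [Algebra K A]
    [AddCommGroup M] [Module K M] [Module A M] [IsScalarTower K A M]
    {W : (Fin p → ℤ) → Submodule K A} (hW : IsMultifiltration W)
    {ι κ : Type*} [Finite ι] [Finite κ] {g : ι → M} {h : κ → M}
    (hg : Submodule.span A (Set.range g) = ⊤) (hh : Submodule.span A (Set.range h) = ⊤)
    {φ ψ : MvPolynomial (Fin p) ℚ}
    (hφ : ∀ᶠ r : Fin p → ℤ in Filter.atTop,
      eval (fun i => (r i : ℚ)) φ = Module.finrank K (inducedFiltration W g r))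
    (hψ : ∀ᶠ r : Fin p → ℤ in Filter.atTop,
      eval (fun i => (r i : ℚ)) ψ = Module.finrank K (inducedFiltration W h r))
    {N : Fin p → ℕ} {a b : (Fin p → ℕ) → ℤ}
    (ha : IsCanonicalRep N a φ) (hb : IsCanonicalRep N b ψ) :
    φ.totalDegree = ψ.totalDegree ∧
    a N = b N ∧
    lexMaxSet {v | a v ≠ 0} = lexMaxSet {v | b v ≠ 0} ∧
    (∀ v ∈ lexMaxSet {v | a v ≠ 0}, a v = b v) ∧
    ∀ k : Fin p → ℕ, (∑ i, k i) = φ.totalDegree →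
      coeff (Finsupp.equivFunOnFinite.symm k) φ = coeff (Finsupp.equivFunOnFinite.symm k) ψ := by
  have hφψ : AntisymmRel ShiftDominated φ ψ :=
    ⟨hW.shiftDominated hh hφ hψ, hW.shiftDominated hg hψ hφ⟩
  have hone (i : Fin p) : 0 < (1 : Fin p → ℕ) i := one_pos
  refine ⟨?_, ha.apply_box_eq_of_antisymmRel hb hφψ, ?_,
    fun v => ha.apply_eq_of_mem_lexMaxSet hb hφψ, fun k hk => ?_⟩
  · simpa only [weightedTotalDegree_one] using weightedTotalDegree_eq_of_antisymmRel hφψ hone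
  · exact (ha.lexMaxSet_subset hb hφψ).antisymm (hb.lexMaxSet_subset ha hφψ.symm)
  · refine coeff_eq_of_antisymmRel hφψ hone ?_
    rw [weightedTotalDegree_one, weight_equivFunOnFinite_symm, dotProduct_one, hk]

theorem statement_19 (n p : ℕ) (hp : 1 ≤ p) (K : Type) [Field K] [CharZero K]
    (nn : Fin p → ℕ) (hn : ∑ j, nn j = n)
    (B : Fin n → Fin p) (hBmono : Monotone B)
    (hBcard : ∀ j, (Finset.univ.filter fun i => B i = j).card = nn j)
    (M : Type) [AddCommGroup M] [Module K M] [Module (WeylAlg n K) M]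
    [IsScalarTower K (WeylAlg n K) M]
    (m q : ℕ) (g : Fin m → M) (h : Fin q → M)
    (hg : Submodule.span (WeylAlg n K) (Set.range g) = ⊤)
    (hh : Submodule.span (WeylAlg n K) (Set.range h) = ⊤)
    (φ φ' : MvPolynomial (Fin p) ℚ)
    (hφnum : IsNumerical φ) (hφ'num : IsNumerical φ')
    (hφ : ∃ s : Fin p → ℤ, ∀ r : Fin p → ℤ, (∀ i, s i ≤ r i) →
      MvPolynomial.eval (fun i => (r i : ℚ)) φ =
        (Module.finrank K (modFilB n p K B M m g r) : ℚ))
    (hφ' : ∃ s : Fin p → ℤ, ∀ r : Fin p → ℤ, (∀ i, s i ≤ r i) →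
      MvPolynomial.eval (fun i => (r i : ℚ)) φ' =
        (Module.finrank K (modFilB n p K B M q h r) : ℚ))
    (aC bC : (Fin p → ℕ) → ℤ)
    (haC0 : ∀ v : Fin p → ℕ, (∃ i, nn i < v i) → aC v = 0)
    (hbC0 : ∀ v : Fin p → ℕ, (∃ i, nn i < v i) → bC v = 0)
    (haC : φ = ∑ v ∈ Fintype.piFinset (fun i => Finset.range (nn i + 1)),
      (aC v : ℚ) • ∏ i, binomShift i (v i : ℤ) (v i))
    (hbC : φ' = ∑ v ∈ Fintype.piFinset (fun i => Finset.range (nn i + 1)),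
      (bC v : ℚ) • ∏ i, binomShift i (v i : ℤ) (v i)) :
    φ.totalDegree = φ'.totalDegree ∧
    aC nn = bC nn ∧
    lexMaxSet {v | aC v ≠ 0} = lexMaxSet {v | bC v ≠ 0} ∧
    (∀ v ∈ lexMaxSet {v | aC v ≠ 0}, aC v = bC v) ∧
    ∀ k : Fin p → ℕ, (∑ i, k i) = φ.totalDegree →
      MvPolynomial.coeff (Finsupp.equivFunOnFinite.symm k) φ =
        MvPolynomial.coeff (Finsupp.equivFunOnFinite.symm k) φ' :=
  statement_19_general (isMultifiltration_bernWB B) hg hh (Filter.eventually_atTop.2 hφ)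
    (Filter.eventually_atTop.2 hφ') ⟨haC0, haC⟩ ⟨hbC0, hbC⟩
end
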